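/- Let d ≥ 3, 0 < λ < d − 2, σ > 0, κ ∈ {1, −1}, T > 0, η > 0, and set p* = d/(d−λ). There exists a constant C* > 0 depending only on d, λ, σ, and for every M > 0 a constant C > 0 depending only on d, λ, σ, T, M and the mollifier χ, such that: for every classical Schwartz-class solution w of ∂_t w = σΔw − κ div(w ∇V^η * w) on [0,T] with ‖w(0)‖_{L^{p*}(ℝ^d)} < C* and ‖w(0)‖_{L¹(ℝ^d)} + ‖w(0)‖_{L^∞(ℝ^d)} ≤ M, one has sup_{0 ≤ t ≤ T} ‖w(t)‖_{L^∞(ℝ^d)} ≤ C; in particular the bound is uniform in η. -/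

import Mathlib

open MeasureTheory Set

noncomputable section

/-- Laplacian of a scalar function on `ℝ^d`. -/
def lapl {d : ℕ} (f : EuclideanSpace ℝ (Fin d) → ℝ) (x : EuclideanSpace ℝ (Fin d)) : ℝ :=
  ∑ i : Fin d, fderiv ℝ (fun y => fderiv ℝ f y (EuclideanSpace.single i 1)) x
    (EuclideanSpace.single i 1)

/-- Divergence of a vector field on `ℝ^d`. -/
def diverg {d : ℕ} (F : EuclideanSpace ℝ (Fin d) → EuclideanSpace ℝ (Fin d))
    (x : EuclideanSpace ℝ (Fin d)) : ℝ :=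
  ∑ i : Fin d, fderiv ℝ (fun y => F y i) x (EuclideanSpace.single i 1)

/-- The mollified Riesz potential `V^η = χ^η * Φ` with `χ^η(x) = η^{-d} χ(x/η)` and
`Φ(x) = |x|^{-λ}`. -/
def Veta {d : ℕ} (lam : ℝ) (χ : EuclideanSpace ℝ (Fin d) → ℝ) (η : ℝ)
    (z : EuclideanSpace ℝ (Fin d)) : ℝ :=
  ∫ y, (η ^ (-(d : ℝ)) * χ (η⁻¹ • (z - y))) * ‖y‖ ^ (-lam)

/-- A classical Schwartz-class solution of `∂_t w = σΔw − κ div(w (K * w))` on `[0,T]`,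
where `(K * w)(x) = ∫ K(x−y) w(y) dy` for a vector-valued interaction kernel `K`
(in the application, `K = ∇V^η` or `K = ∇Φ`): `(t,x) ↦ w(t,x)` is smooth,
`w(t,·)` is a Schwartz function for every `t ∈ [0,T]`, `w ≥ 0`, `∫ w(t,x) dx = 1`,
and the equation holds pointwise. -/
def IsAggregationSolution {d : ℕ} (σ κ T : ℝ)
    (K : EuclideanSpace ℝ (Fin d) → EuclideanSpace ℝ (Fin d))
    (w : ℝ → EuclideanSpace ℝ (Fin d) → ℝ) : Prop :=
  ContDiffOn ℝ (⊤ : ℕ∞) (fun p : ℝ × EuclideanSpace ℝ (Fin d) => w p.1 p.2) (Icc 0 T ×ˢ univ) ∧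
  (∀ t ∈ Icc (0:ℝ) T, ∃ S : SchwartzMap (EuclideanSpace ℝ (Fin d)) ℝ, ∀ x, w t x = S x) ∧
  (∀ t ∈ Icc (0:ℝ) T, ∀ x, 0 ≤ w t x) ∧
  (∀ t ∈ Icc (0:ℝ) T, (∫ x, w t x) = 1) ∧
  (∀ t ∈ Icc (0:ℝ) T, ∀ x, HasDerivWithinAt (fun s => w s x)
    (σ * lapl (w t) x - κ * diverg (fun z => w t z • ∫ y, w t y • K (z - y)) x)
    (Icc 0 T) t)

/-!
Test the equation against the backward heat kernel. With `G_τ` the Gaussian of scale `τ` and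
`b = κ ∇V^η * w` the drift, the averages `G_τ * w(t)` are bounded by `G_{4σt+τ} * w(0)` plus the
time integral of `‖b(s)‖_∞ (t - s)^{-1/2}` against averages of `w(s)` at twice the scale. Writing
`|z|^{-λ-1}` as a superposition of Gaussians bounds `√s ‖b(s)‖_∞` by the scale-critical quantity
`sup_τ (4σs + τ)^{(d-λ)/2} ‖G_τ * w(s)‖_∞`, with a constant that does not see `η`: the scales
`τ < δ` contribute an error depending on `η`, but vanishing as `δ → 0`. At `s = 0` Hölder's
inequality makes this quantity small with `‖w(0)‖_{L^{p*}}`, and a continuation argument keeps it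
small, so `‖b(s)‖_∞ ≤ ε s^{-1/2}` on `[0,T]`. With such a drift the Duhamel term is at most half
the supremum of all averages, hence `‖w(t)‖_∞ ≤ 2 ‖w(0)‖_∞`.
-/

section

open Filter Topology
open scoped Gradient

variable {d : ℕ}

local notation:max "ℝ^" d:max => EuclideanSpace ℝ (Fin d)

/-- The Gaussian density `(πτ)^{-d/2} exp(-|x|²/τ)` on `ℝ^d`. In this scaling `gaussianKernel (4σt)`
is the fundamental solution of `∂_t u = σΔu`. -/
def gaussianKernel (τ : ℝ) (x : ℝ^d) : ℝ :=
  (Real.pi * τ) ^ (-(d : ℝ) / 2) * Real.exp (-(τ⁻¹ * ‖x‖ ^ 2))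

lemma gaussianKernel_pos {τ : ℝ} (hτ : 0 < τ) (x : ℝ^d) : 0 < gaussianKernel τ x := by
  have := Real.pi_pos
  unfold gaussianKernel
  positivity

lemma gaussianKernel_le {τ : ℝ} (hτ : 0 < τ) (x : ℝ^d) :
    gaussianKernel τ x ≤ τ ^ (-(d : ℝ) / 2) := by
  have hexp : Real.exp (-(τ⁻¹ * ‖x‖ ^ 2)) ≤ 1 :=
    Real.exp_le_one_iff.2 (neg_nonpos.2 (by positivity))
  have hpi : τ ≤ Real.pi * τ := le_mul_of_one_le_left hτ.le (by linarith [Real.pi_gt_three])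
  have hd : -(d : ℝ) / 2 ≤ 0 := div_nonpos_of_nonpos_of_nonneg (by simp) zero_le_two
  calc gaussianKernel τ x ≤ (Real.pi * τ) ^ (-(d : ℝ) / 2) :=
        mul_le_of_le_one_right (Real.rpow_nonneg (hτ.le.trans hpi) _) hexp
    _ ≤ τ ^ (-(d : ℝ) / 2) := Real.rpow_le_rpow_of_nonpos hτ hpi hd

lemma continuous_gaussianKernel (τ : ℝ) : Continuous (gaussianKernel τ : ℝ^d → ℝ) := by
  unfold gaussianKernel
  fun_prop

lemma integral_exp_neg_mul_norm_sq {b : ℝ} (hb : 0 < b) :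
    ∫ y : ℝ^d, Real.exp (-(b * ‖y‖ ^ 2)) = (Real.pi / b) ^ ((d : ℝ) / 2) := by
  simpa [neg_mul] using GaussianFourier.integral_rexp_neg_mul_sq_norm (V := ℝ^d) hb

lemma integrable_exp_neg_mul_norm_sq {b : ℝ} (hb : 0 < b) :
    Integrable fun y : ℝ^d => Real.exp (-(b * ‖y‖ ^ 2)) := by
  refine Integrable.of_integral_ne_zero ?_
  rw [integral_exp_neg_mul_norm_sq hb]
  exact (Real.rpow_pos_of_pos (div_pos Real.pi_pos hb) _).ne'

lemma integrable_gaussianKernel {τ : ℝ} (hτ : 0 < τ) : Integrable (gaussianKernel τ : ℝ^d → ℝ) :=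
  (integrable_exp_neg_mul_norm_sq (inv_pos.2 hτ)).const_mul _

lemma integral_gaussianKernel {τ : ℝ} (hτ : 0 < τ) : ∫ y : ℝ^d, gaussianKernel τ y = 1 := by
  have hpi : 0 < Real.pi * τ := mul_pos Real.pi_pos hτ
  unfold gaussianKernel
  rw [integral_const_mul, integral_exp_neg_mul_norm_sq (inv_pos.2 hτ), div_inv_eq_mul, neg_div,
    ← Real.rpow_add hpi, neg_add_cancel, Real.rpow_zero]

/-- The constant in the Gaussian gradient bound `|∇G_τ| ≤ C τ^{-1/2} G_{2τ}`. -/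
def gaussianGradConst (d : ℕ) : ℝ := 2 * 2 ^ ((d : ℝ) / 2)

lemma gaussianGradConst_pos (d : ℕ) : 0 < gaussianGradConst d := by
  unfold gaussianGradConst
  positivity

lemma mul_exp_neg_sq_le (u : ℝ) : u * Real.exp (-u ^ 2) ≤ Real.exp (-(u ^ 2 / 2)) := by
  have hu : u ≤ Real.exp (u ^ 2 / 2) := by
    nlinarith [Real.add_one_le_exp (u ^ 2 / 2), sq_nonneg (u - 1)]
  calc u * Real.exp (-u ^ 2) ≤ Real.exp (u ^ 2 / 2) * Real.exp (-u ^ 2) := by gcongr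
    _ = Real.exp (-(u ^ 2 / 2)) := by rw [← Real.exp_add]; ring_nf

lemma norm_mul_gaussianKernel_le {r : ℝ} (hr : 0 < r) (x : ℝ^d) :
    2 / r * ‖x‖ * gaussianKernel r x
      ≤ gaussianGradConst d * r ^ (-(1 : ℝ) / 2) * gaussianKernel (2 * r) x := by
  have hs : 0 < √r := Real.sqrt_pos.2 hr
  have hpow : r ^ (-(1 : ℝ) / 2) = (√r)⁻¹ := by
    rw [neg_div, Real.rpow_neg hr.le, Real.sqrt_eq_rpow]
  have hcoeff : (Real.pi * (2 * r)) ^ (-(d : ℝ) / 2)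
      = (2 ^ ((d : ℝ) / 2))⁻¹ * (Real.pi * r) ^ (-(d : ℝ) / 2) := by
    rw [mul_left_comm, Real.mul_rpow zero_le_two (by positivity), neg_div,
      Real.rpow_neg zero_le_two]
  have hexp : r⁻¹ * ‖x‖ ^ 2 = (‖x‖ / √r) ^ 2 := by
    rw [div_pow, Real.sq_sqrt hr.le, div_eq_inv_mul]
  have hexp2 : (2 * r)⁻¹ * ‖x‖ ^ 2 = (‖x‖ / √r) ^ 2 / 2 := by
    rw [← hexp, mul_inv]; ring
  have hdiv : 2 / r * ‖x‖ = 2 * (√r)⁻¹ * (‖x‖ / √r) := by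
    nth_rewrite 1 [← Real.mul_self_sqrt hr.le]
    field_simp
  unfold gaussianKernel gaussianGradConst
  rw [hcoeff, hpow, hexp, hexp2, hdiv]
  calc 2 * (√r)⁻¹ * (‖x‖ / √r)
        * ((Real.pi * r) ^ (-(d : ℝ) / 2) * Real.exp (-(‖x‖ / √r) ^ 2))
      = 2 * (√r)⁻¹ * (Real.pi * r) ^ (-(d : ℝ) / 2)
        * (‖x‖ / √r * Real.exp (-(‖x‖ / √r) ^ 2)) := by ring
    _ ≤ 2 * (√r)⁻¹ * (Real.pi * r) ^ (-(d : ℝ) / 2) * Real.exp (-((‖x‖ / √r) ^ 2 / 2)) := by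
        gcongr
        exact mul_exp_neg_sq_le _
    _ = _ := by field_simp

/-- The convolution `G_τ * f` with the Gaussian density of `gaussianKernel`. -/
def gaussianAverage (τ : ℝ) (f : ℝ^d → ℝ) (x : ℝ^d) : ℝ := ∫ y, gaussianKernel τ (x - y) * f y

section GaussianAverage

variable {τ : ℝ} {f : ℝ^d → ℝ}

lemma integrable_gaussianKernel_sub_mul (hτ : 0 < τ) (hf : Integrable f) (x : ℝ^d) :
    Integrable fun y => gaussianKernel τ (x - y) * f y := by
  refine hf.bdd_mul (c := τ ^ (-(d : ℝ) / 2))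
    ((continuous_gaussianKernel τ).comp (by fun_prop)).aestronglyMeasurable
    (ae_of_all _ fun y => ?_)
  rw [Real.norm_of_nonneg (gaussianKernel_pos hτ _).le]
  exact gaussianKernel_le hτ _

lemma gaussianAverage_nonneg (hτ : 0 < τ) (hf : ∀ x, 0 ≤ f x) (x : ℝ^d) :
    0 ≤ gaussianAverage τ f x :=
  integral_nonneg fun y => mul_nonneg (gaussianKernel_pos hτ _).le (hf y)

lemma gaussianAverage_le_rpow_mul_integral (hτ : 0 < τ) (hf : Integrable f) (hf0 : ∀ x, 0 ≤ f x)
    (x : ℝ^d) : gaussianAverage τ f x ≤ τ ^ (-(d : ℝ) / 2) * ∫ y, f y := by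
  rw [← integral_const_mul]
  exact integral_mono (integrable_gaussianKernel_sub_mul hτ hf x) (hf.const_mul _)
    fun y => mul_le_mul_of_nonneg_right (gaussianKernel_le hτ _) (hf0 y)

lemma gaussianAverage_le_of_le {M : ℝ} (hτ : 0 < τ) (hf : Integrable f) (hM : ∀ x, f x ≤ M)
    (x : ℝ^d) : gaussianAverage τ f x ≤ M := by
  calc gaussianAverage τ f x ≤ ∫ y, gaussianKernel τ (x - y) * M :=
        integral_mono (integrable_gaussianKernel_sub_mul hτ hf x)
          (((integrable_gaussianKernel hτ).comp_sub_left x).mul_const M)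
          fun y => mul_le_mul_of_nonneg_left (hM y) (gaussianKernel_pos hτ _).le
    _ = M := by
        rw [integral_mul_const, integral_sub_left_eq_self, integral_gaussianKernel hτ, one_mul]

lemma tendsto_norm_pow_mul_gaussianKernel_one :
    Tendsto (fun y : ℝ^d => ‖y‖ ^ d * gaussianKernel 1 y) (Bornology.cobounded ℝ^d) (𝓝 0) := by
  have hprofile : Tendsto (fun t : ℝ => t ^ d * Real.exp (-(t ^ 2))) atTop (𝓝 0) := by
    refine squeeze_zero' ?_ ?_ (Real.tendsto_pow_mul_exp_neg_atTop_nhds_zero d)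
    · filter_upwards [eventually_ge_atTop 1] with t ht
      positivity
    · filter_upwards [eventually_ge_atTop 1] with t ht
      gcongr
      nlinarith
  have := (hprofile.comp (tendsto_norm_cobounded_atTop (E := ℝ^d))).const_mul
    (Real.pi ^ (-(d : ℝ) / 2))
  rw [mul_zero] at this
  refine this.congr fun y => ?_
  simp only [gaussianKernel, Function.comp_apply, mul_one, inv_one, one_mul]
  ring

lemma pow_mul_gaussianKernel_one_smul {c : ℝ} (hc : 0 < c) (x : ℝ^d) :
    c ^ d * gaussianKernel 1 (c • x) = gaussianKernel (c ^ 2)⁻¹ x := by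
  have hpow : ((c ^ 2)⁻¹) ^ (-(d : ℝ) / 2) = c ^ d := by
    rw [neg_div, Real.rpow_neg (by positivity), ← Real.inv_rpow (by positivity), inv_inv,
      ← Real.rpow_natCast c 2, ← Real.rpow_mul hc.le, ← Real.rpow_natCast c d]
    congr 1
    push_cast
    ring
  unfold gaussianKernel
  rw [Real.mul_rpow Real.pi_pos.le (inv_nonneg.2 (sq_nonneg c)), hpow, norm_smul,
    Real.norm_of_nonneg hc.le]
  simp only [mul_one, inv_one, one_mul, inv_inv, mul_pow]
  ring

lemma tendsto_gaussianAverage (hf : Integrable f) (hc : Continuous f) (x : ℝ^d) :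
    Tendsto (fun c : ℝ => gaussianAverage (c ^ 2)⁻¹ f x) atTop (𝓝 (f x)) := by
  have h := tendsto_integral_comp_smul_smul_of_integrable' (μ := (volume : Measure ℝ^d))
    (fun y => (gaussianKernel_pos one_pos y).le) (integral_gaussianKernel one_pos)
    (by simpa only [finrank_euclideanSpace_fin] using tendsto_norm_pow_mul_gaussianKernel_one)
    hf (x₀ := x) hc.continuousAt
  refine h.congr' ?_
  filter_upwards [eventually_gt_atTop 0] with c hc
  simp only [finrank_euclideanSpace_fin, smul_eq_mul, pow_mul_gaussianKernel_one_smul hc,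
    gaussianAverage]

lemma le_of_forall_gaussianAverage_le {C : ℝ} (hf : Integrable f) (hc : Continuous f) (x : ℝ^d)
    (h : ∀ τ, 0 < τ → gaussianAverage τ f x ≤ C) : f x ≤ C :=
  le_of_tendsto (tendsto_gaussianAverage hf hc x)
    ((eventually_gt_atTop 0).mono fun c hc => h _ (by positivity))

end GaussianAverage

lemma gradient_apply (f : ℝ^d → ℝ) (y : ℝ^d) (i : Fin d) :
    ∇ f y i = fderiv ℝ f y (EuclideanSpace.single i 1) := by
  rw [← inner_gradient_left, EuclideanSpace.inner_single_right]
  simp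

lemma inner_gradient_eq_sum (f : ℝ^d → ℝ) (y v : ℝ^d) :
    inner ℝ (∇ f y) v = ∑ i, fderiv ℝ f y (EuclideanSpace.single i 1) * v i := by
  simp only [PiLp.inner_apply, RCLike.inner_apply, conj_trivial, gradient_apply]
  exact Finset.sum_congr rfl fun i _ => mul_comm _ _

lemma norm_gradient (f : ℝ^d → ℝ) (y : ℝ^d) : ‖∇ f y‖ = ‖fderiv ℝ f y‖ :=
  (InnerProductSpace.toDual ℝ ℝ^d).symm.norm_map _

lemma gradient_mul {φ g : ℝ^d → ℝ} {y : ℝ^d} (hφ : DifferentiableAt ℝ φ y)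
    (hg : DifferentiableAt ℝ g y) :
    ∇ (fun z => φ z * g z) y = φ y • ∇ g y + g y • ∇ φ y := by
  simp only [gradient, fderiv_fun_mul hφ hg, map_add, map_smulₛₗ, conj_trivial]

lemma contDiff_fderiv_apply_const {f : ℝ^d → ℝ} (hf : ContDiff ℝ 2 f) (v : ℝ^d) :
    ContDiff ℝ 1 fun z => fderiv ℝ f z v :=
  (hf.fderiv_right (m := 1) (by norm_num)).clm_apply contDiff_const

lemma contDiff_coord {n : WithTop ℕ∞} {F : ℝ^d → ℝ^d} (hF : ContDiff ℝ n F) (i : Fin d) :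
    ContDiff ℝ n fun y => F y i :=
  (EuclideanSpace.proj i : ℝ^d →L[ℝ] ℝ).contDiff.comp hF

lemma continuous_fderiv_apply_const {f : ℝ^d → ℝ} (hf : ContDiff ℝ 1 f) (v : ℝ^d) :
    Continuous fun z => fderiv ℝ f z v :=
  (hf.continuous_fderiv one_ne_zero).clm_apply continuous_const

lemma continuous_gradient {f : ℝ^d → ℝ} (hf : ContDiff ℝ 1 f) : Continuous (∇ f) :=
  (InnerProductSpace.toDual ℝ ℝ^d).symm.continuous.comp (hf.continuous_fderiv one_ne_zero)

lemma continuous_lapl {f : ℝ^d → ℝ} (hf : ContDiff ℝ 2 f) : Continuous (lapl f) :=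
  continuous_finsetSum _ fun _ _ =>
    continuous_fderiv_apply_const (contDiff_fderiv_apply_const hf _) _

lemma continuous_diverg {F : ℝ^d → ℝ^d} (hF : ContDiff ℝ 1 F) : Continuous (diverg F) :=
  continuous_finsetSum _ fun i _ => continuous_fderiv_apply_const (contDiff_coord hF i) _

lemma hasCompactSupport_lapl {f : ℝ^d → ℝ} (hf : HasCompactSupport f) :
    HasCompactSupport (lapl f) := by
  refine HasCompactSupport.intro hf.isCompact fun y hy => Finset.sum_eq_zero fun i _ => ?_
  set e := EuclideanSpace.single i (1 : ℝ)
  exact image_eq_zero_of_notMem_tsupport (f := fun z => fderiv ℝ (fun z => fderiv ℝ f z e) z e)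
    fun h => hy (tsupport_fderiv_apply_subset ℝ e (tsupport_fderiv_apply_subset ℝ e h))

lemma hasCompactSupport_gradient {f : ℝ^d → ℝ} (hf : HasCompactSupport f) :
    HasCompactSupport (∇ f) :=
  (hf.fderiv ℝ).comp_left (map_zero (InnerProductSpace.toDual ℝ ℝ^d).symm)

lemma diverg_const_smul (c : ℝ) (F : ℝ^d → ℝ^d) (x : ℝ^d) :
    diverg (fun y => c • F y) x = c * diverg F x := by
  have hcoord (i : Fin d) : fderiv ℝ (fun y => (c • F y) i) x = c • fderiv ℝ (fun y => F y i) x :=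
    congrFun (fderiv_const_smul_field c (f := fun y => F y i)) x
  simp only [diverg, hcoord, smul_apply, smul_eq_mul, Finset.mul_sum]

lemma lapl_comp_smul (f : ℝ^d → ℝ) (c : ℝ) (y : ℝ^d) :
    lapl (fun z => f (c • z)) y = c ^ 2 * lapl f (c • y) := by
  have hsecond (e : ℝ^d) : fderiv ℝ (fun z => fderiv ℝ (fun z => f (c • z)) z e) y
      = c ^ 2 • fderiv ℝ (fun z => fderiv ℝ f z e) (c • y) := by
    have hfirst : (fun z => fderiv ℝ (fun z => f (c • z)) z e)
        = c • fun z => fderiv ℝ f (c • z) e := by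
      ext z
      simp only [fderiv_comp_smul, smul_apply, Pi.smul_apply]
    rw [hfirst, fderiv_const_smul_field, Pi.smul_apply,
      fderiv_comp_smul (f := fun z => fderiv ℝ f z e), smul_smul, sq]
  simp only [lapl, hsecond, smul_apply, smul_eq_mul, Finset.mul_sum]

lemma lapl_mul {φ g : ℝ^d → ℝ} (hφ : ContDiff ℝ 2 φ) (hg : ContDiff ℝ 2 g) (y : ℝ^d) :
    lapl (fun z => φ z * g z) y
      = φ y * lapl g y + 2 * inner ℝ (∇ φ y) (∇ g y) + g y * lapl φ y := by
  have hφd := hφ.differentiable two_ne_zero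
  have hgd := hg.differentiable two_ne_zero
  rw [inner_gradient_eq_sum]
  simp only [lapl, Finset.mul_sum, ← Finset.sum_add_distrib, gradient_apply]
  refine Finset.sum_congr rfl fun i _ => ?_
  set e := EuclideanSpace.single i (1 : ℝ)
  have hfirst : (fun z => fderiv ℝ (fun y => φ y * g y) z e)
      = fun z => φ z * fderiv ℝ g z e + g z * fderiv ℝ φ z e := by
    ext z
    simp [fderiv_fun_mul (hφd z) (hgd z)]
  have hφe := (contDiff_fderiv_apply_const hφ e).differentiable one_ne_zero y
  have hge := (contDiff_fderiv_apply_const hg e).differentiable one_ne_zero y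
  rw [hfirst, fderiv_fun_add ((hφd y).fun_mul hge) ((hgd y).fun_mul hφe),
    fderiv_fun_mul (hφd y) hge, fderiv_fun_mul (hgd y) hφe]
  simp only [add_apply, smul_apply, smul_eq_mul]
  ring

lemma integral_mul_fderiv_apply_eq_neg {ψ f : ℝ^d → ℝ} (hψ : ContDiff ℝ 1 ψ)
    (hψc : HasCompactSupport ψ) (hf : ContDiff ℝ 1 f) (v : ℝ^d) :
    ∫ x, ψ x * fderiv ℝ f x v = -∫ x, fderiv ℝ ψ x v * f x :=
  integral_mul_fderiv_eq_neg_fderiv_mul_of_integrable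
    (((continuous_fderiv_apply_const hψ v).mul hf.continuous).integrable_of_hasCompactSupport
      (hψc.fderiv_apply (𝕜 := ℝ) v).mul_right)
    ((hψ.continuous.mul (continuous_fderiv_apply_const hf v)).integrable_of_hasCompactSupport
      hψc.mul_right)
    ((hψ.continuous.mul hf.continuous).integrable_of_hasCompactSupport hψc.mul_right)
    (fun x _ => hψ.differentiable one_ne_zero x) (fun x _ => hf.differentiable one_ne_zero x)

lemma integral_mul_lapl {ψ f : ℝ^d → ℝ} (hψ : ContDiff ℝ 2 ψ) (hψc : HasCompactSupport ψ)
    (hf : ContDiff ℝ 2 f) : ∫ x, ψ x * lapl f x = ∫ x, lapl ψ x * f x := by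
  simp only [lapl, Finset.mul_sum, Finset.sum_mul]
  rw [integral_finsetSum, integral_finsetSum]
  · refine Finset.sum_congr rfl fun i _ => ?_
    rw [integral_mul_fderiv_apply_eq_neg (hψ.of_le one_le_two) hψc
        (contDiff_fderiv_apply_const hf _),
      integral_mul_fderiv_apply_eq_neg (contDiff_fderiv_apply_const hψ _)
        (hψc.fderiv_apply (𝕜 := ℝ) _) (hf.of_le one_le_two), neg_neg]
  · exact fun i _ => ((continuous_fderiv_apply_const (contDiff_fderiv_apply_const hψ _) _).mul
      hf.continuous).integrable_of_hasCompactSupport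
        ((hψc.fderiv_apply (𝕜 := ℝ) _).fderiv_apply (𝕜 := ℝ) _).mul_right
  · exact fun i _ => (hψ.continuous.mul (continuous_fderiv_apply_const
      (contDiff_fderiv_apply_const hf _) _)).integrable_of_hasCompactSupport hψc.mul_right

lemma integral_mul_diverg {ψ : ℝ^d → ℝ} {F : ℝ^d → ℝ^d} (hψ : ContDiff ℝ 1 ψ)
    (hψc : HasCompactSupport ψ) (hF : ContDiff ℝ 1 F) :
    ∫ x, ψ x * diverg F x = -∫ x, inner ℝ (∇ ψ x) (F x) := by
  simp only [diverg, Finset.mul_sum, inner_gradient_eq_sum]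
  rw [integral_finsetSum, integral_finsetSum, ← Finset.sum_neg_distrib]
  · exact Finset.sum_congr rfl fun i _ =>
      integral_mul_fderiv_apply_eq_neg hψ hψc (contDiff_coord hF i) _
  · exact fun i _ => ((continuous_fderiv_apply_const hψ _).mul
      (contDiff_coord hF i).continuous).integrable_of_hasCompactSupport
        (hψc.fderiv_apply (𝕜 := ℝ) _).mul_right
  · exact fun i _ => (hψ.continuous.mul (continuous_fderiv_apply_const
      (contDiff_coord hF i) _)).integrable_of_hasCompactSupport hψc.mul_right

/-- A smooth compactly supported cutoff `0 ≤ φ ≤ 1`, equal to `1` on the ball of radius `R`, whose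
first derivative and Laplacian are bounded by `q`. -/
structure IsCutoff (R q : ℝ) (φ : ℝ^d → ℝ) : Prop where
  contDiff : ContDiff ℝ 2 φ
  hasCompactSupport : HasCompactSupport φ
  nonneg (y : ℝ^d) : 0 ≤ φ y
  le_one (y : ℝ^d) : φ y ≤ 1
  eq_one (y : ℝ^d) : ‖y‖ ≤ R → φ y = 1
  norm_gradient_le (y : ℝ^d) : ‖∇ φ y‖ ≤ q
  abs_lapl_le (y : ℝ^d) : |lapl φ y| ≤ q

lemma exists_isCutoff (d : ℕ) :
    ∃ C : ℝ, ∀ R : ℝ, 1 ≤ R → ∃ φ : ℝ^d → ℝ, IsCutoff R (C / R) φ := by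
  let f : ContDiffBump (0 : ℝ^d) := ⟨1, 2, one_pos, one_lt_two⟩
  have hf : ContDiff ℝ 2 f := f.contDiff
  obtain ⟨C₁, hC₁⟩ := (hf.continuous_fderiv two_ne_zero).bounded_above_of_compact_support
    (f.hasCompactSupport.fderiv ℝ)
  obtain ⟨C₂, hC₂⟩ := (continuous_lapl hf).bounded_above_of_compact_support
    (hasCompactSupport_lapl f.hasCompactSupport)
  have hC₂0 : 0 ≤ C₂ := (norm_nonneg _).trans (hC₂ 0)
  refine ⟨max C₁ C₂, fun R hR => ⟨fun y => f (R⁻¹ • y), ?_⟩⟩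
  have hR0 : 0 < R := one_pos.trans_le hR
  have hRinv : R⁻¹ ≤ 1 := inv_le_one_of_one_le₀ hR
  exact
    { contDiff := hf.comp (contDiff_const_smul _)
      hasCompactSupport := f.hasCompactSupport.comp_smul (inv_ne_zero hR0.ne')
      nonneg := fun y => f.nonneg
      le_one := fun y => f.le_one
      eq_one := fun y hy => f.one_of_mem_closedBall <| by
        rw [mem_closedBall_zero_iff, norm_smul, norm_inv, Real.norm_of_nonneg hR0.le,
          inv_mul_le_iff₀ hR0]
        simpa [f] using hy
      norm_gradient_le := fun y => by
        rw [norm_gradient, fderiv_comp_smul (f := f), norm_smul, norm_inv,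
          Real.norm_of_nonneg hR0.le, div_eq_inv_mul]
        gcongr
        exact (hC₁ _).trans (le_max_left _ _)
      abs_lapl_le := fun y => by
        rw [lapl_comp_smul, abs_mul, abs_of_nonneg (by positivity), div_eq_inv_mul]
        calc R⁻¹ ^ 2 * |lapl f (R⁻¹ • y)| ≤ R⁻¹ ^ 2 * C₂ := by gcongr; exact hC₂ _
          _ ≤ R⁻¹ * C₂ := by gcongr; nlinarith [inv_pos.2 hR0]
          _ ≤ R⁻¹ * max C₁ C₂ := by gcongr; exact le_max_right _ _ }

lemma contDiff_gaussianKernel_sub {n : WithTop ℕ∞} (r : ℝ) (x : ℝ^d) :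
    ContDiff ℝ n fun y => gaussianKernel r (x - y) := by
  have hsq : ContDiff ℝ n fun y : ℝ^d => ‖x - y‖ ^ 2 := (contDiff_const.sub contDiff_id).norm_sq ℝ
  unfold gaussianKernel
  fun_prop

lemma hasGradientAt_gaussianKernel_sub (r : ℝ) (x y : ℝ^d) :
    HasGradientAt (fun y => gaussianKernel r (x - y))
      ((2 / r * gaussianKernel r (x - y)) • (x - y)) y := by
  have hsq := ((hasFDerivAt_id y).const_sub x).norm_sq
  refine (((hsq.const_mul r⁻¹).neg.exp).const_mul
    ((Real.pi * r) ^ (-(d : ℝ) / 2))).congr_fderiv ?_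
  ext v
  simp [gaussianKernel]
  ring

lemma norm_gradient_gaussianKernel_sub_le {r : ℝ} (hr : 0 < r) (x y : ℝ^d) :
    ‖∇ (fun y => gaussianKernel r (x - y)) y‖
      ≤ gaussianGradConst d * r ^ (-(1 : ℝ) / 2) * gaussianKernel (2 * r) (x - y) := by
  have hG := gaussianKernel_pos hr (x - y)
  rw [(hasGradientAt_gaussianKernel_sub r x y).gradient, norm_smul,
    Real.norm_of_nonneg (by positivity)]
  calc 2 / r * gaussianKernel r (x - y) * ‖x - y‖
      = 2 / r * ‖x - y‖ * gaussianKernel r (x - y) := by ring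
    _ ≤ _ := norm_mul_gaussianKernel_le hr _

lemma lapl_gaussianKernel_sub (r : ℝ) (x y : ℝ^d) :
    lapl (fun y => gaussianKernel r (x - y)) y
      = (-(2 * d / r) + 4 / r ^ 2 * ‖x - y‖ ^ 2) * gaussianKernel r (x - y) := by
  have hfirst (i : Fin d) : (fun z => fderiv ℝ (fun y => gaussianKernel r (x - y)) z
      (EuclideanSpace.single i 1)) = fun z => 2 / r * (x i - z i) * gaussianKernel r (x - z) := by
    ext z
    rw [← gradient_apply, (hasGradientAt_gaussianKernel_sub r x z).gradient]
    simp only [PiLp.smul_apply, PiLp.sub_apply, smul_eq_mul]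
    ring
  have hsecond (i : Fin d) : fderiv ℝ (fun z => 2 / r * (x i - z i) * gaussianKernel r (x - z)) y
      (EuclideanSpace.single i 1)
        = (-(2 / r) + 4 / r ^ 2 * (x i - y i) ^ 2) * gaussianKernel r (x - y) := by
    have hcoord : HasFDerivAt (fun z : ℝ^d => z i) (EuclideanSpace.proj i : ℝ^d →L[ℝ] ℝ) y :=
      (EuclideanSpace.proj i : ℝ^d →L[ℝ] ℝ).hasFDerivAt
    rw [(((hcoord.const_sub (x i)).const_mul (2 / r)).fun_mul
      (hasGradientAt_gaussianKernel_sub r x y).hasFDerivAt).fderiv]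
    simp [EuclideanSpace.inner_single_right]
    ring
  simp only [lapl, hfirst, hsecond]
  rw [← Finset.sum_mul, Finset.sum_add_distrib, ← Finset.mul_sum, EuclideanSpace.norm_sq_eq]
  simp only [Finset.sum_const, Finset.card_univ, Fintype.card_fin, nsmul_eq_mul, PiLp.sub_apply,
    Real.norm_eq_abs, sq_abs]
  ring

lemma hasDerivAt_gaussianKernel_sub {r : ℝ} (hr : 0 < r) (x y : ℝ^d) :
    HasDerivAt (fun r => gaussianKernel r (x - y))
      (lapl (fun y => gaussianKernel r (x - y)) y / 4) r := by
  have hpi : Real.pi * r ≠ 0 := (mul_pos Real.pi_pos hr).ne'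
  have hcoeff := ((hasDerivAt_id r).const_mul Real.pi).rpow_const (p := -(d : ℝ) / 2) (Or.inl hpi)
  have hexp := (((hasDerivAt_inv hr.ne').mul_const (‖x - y‖ ^ 2)).neg).exp
  refine (hcoeff.mul hexp).congr_deriv ?_
  rw [lapl_gaussianKernel_sub, gaussianKernel]
  simp only [id, Pi.neg_apply, Real.rpow_sub_one hpi]
  field_simp
  ring

lemma continuousOn_gaussianKernel_sub {r : ℝ → ℝ} {I : Set ℝ} (hr : ContinuousOn r I)
    (hpos : ∀ s ∈ I, 0 < r s) (x : ℝ^d) :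
    ContinuousOn (fun p : ℝ × ℝ^d => gaussianKernel (r p.1) (x - p.2)) (I ×ˢ univ) := by
  have hr' : ContinuousOn (fun p : ℝ × ℝ^d => r p.1) (I ×ˢ univ) :=
    hr.comp continuousOn_fst fun p hp => hp.1
  have hne (p : ℝ × ℝ^d) (hp : p ∈ I ×ˢ univ) : r p.1 ≠ 0 := (hpos _ hp.1).ne'
  refine ContinuousOn.mul ((continuousOn_const.mul hr').rpow_const fun p hp =>
    Or.inl (mul_ne_zero Real.pi_ne_zero (hne p hp))) ?_
  exact Real.continuous_exp.comp_continuousOn (((hr'.inv₀ hne).mul (by fun_prop)).neg)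

lemma continuous_slice {f : ℝ → ℝ^d → ℝ} {I : Set ℝ}
    (hf : ContinuousOn (Function.uncurry f) (I ×ˢ univ)) {s : ℝ} (hs : s ∈ I) : Continuous (f s) :=
  hf.comp_continuous (f := fun y => (s, y)) (by fun_prop) fun y => ⟨hs, mem_univ _⟩

lemma hasDerivAt_eq_zero_of_eqOn_zero {f : ℝ → ℝ} {f' s : ℝ} {I : Set ℝ} (hI : IsOpen I)
    (hs : s ∈ I) (hf : HasDerivAt f f' s) (hzero : ∀ u ∈ I, f u = 0) : f' = 0 :=
  hf.unique ((hasDerivAt_const s 0).congr_of_eventuallyEq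
    (eventually_of_mem (hI.mem_nhds hs) hzero))

lemma hasDerivAt_integral_of_isCompact {f f' : ℝ → ℝ^d → ℝ} {I : Set ℝ} (hI : IsOpen I)
    {k : Set ℝ^d} (hk : IsCompact k)
    (hf : ContinuousOn (Function.uncurry f) (I ×ˢ univ))
    (hf' : ContinuousOn (Function.uncurry f') (I ×ˢ univ))
    (hderiv : ∀ s ∈ I, ∀ y, HasDerivAt (fun s => f s y) (f' s y) s)
    (hzero : ∀ s ∈ I, ∀ y ∉ k, f s y = 0) {s₀ : ℝ} (hs₀ : s₀ ∈ I) :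
    HasDerivAt (fun s => ∫ y, f s y) (∫ y, f' s₀ y) s₀ := by
  have hzero' (s : ℝ) (hs : s ∈ I) (y : ℝ^d) (hy : y ∉ k) : f' s y = 0 :=
    hasDerivAt_eq_zero_of_eqOn_zero hI hs (hderiv s hs y) fun u hu => hzero u hu y hy
  obtain ⟨ε, hε, hsub⟩ := Metric.nhds_basis_closedBall.mem_iff.1 (hI.mem_nhds hs₀)
  obtain ⟨C, hC⟩ := ((isCompact_closedBall s₀ ε).prod hk).exists_bound_of_continuousOn
    (hf'.mono (prod_mono hsub (subset_univ k)))
  refine (hasDerivAt_integral_of_dominated_loc_of_deriv_le (bound := k.indicator fun _ => C)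
    (Metric.closedBall_mem_nhds s₀ hε) ?_ ?_ (continuous_slice hf' hs₀).aestronglyMeasurable
    (ae_of_all _ fun y s hs => ?_) ?_ (ae_of_all _ fun y s hs => hderiv s (hsub hs) y)).2
  · filter_upwards [hI.mem_nhds hs₀] with s hs
    exact (continuous_slice hf hs).aestronglyMeasurable
  · exact (continuous_slice hf hs₀).integrable_of_hasCompactSupport
      (HasCompactSupport.intro hk fun y hy => hzero s₀ hs₀ y hy)
  · by_cases hy : y ∈ k
    · rw [indicator_of_mem hy]
      exact hC (s, y) ⟨hs, hy⟩
    · rw [indicator_of_notMem hy, hzero' s (hsub hs) y hy, norm_zero]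
  · rw [integrable_indicator_iff hk.measurableSet]
    exact integrableOn_const hk.measure_lt_top.ne

lemma integral_mono_of_nonneg_right {α : Type*} [MeasurableSpace α] {μ : Measure α} {f g : α → ℝ}
    (hg0 : ∀ y, 0 ≤ g y) (hg : Integrable g μ) (h : ∀ y, f y ≤ g y) :
    ∫ y, f y ∂μ ≤ ∫ y, g y ∂μ := by
  by_cases hf : Integrable f μ
  · exact integral_mono hf hg h
  · rw [integral_undef hf]
    exact integral_nonneg hg0

lemma integrable_lapl_mul {ψ u : ℝ^d → ℝ} (hψ : ContDiff ℝ 2 ψ) (hψc : HasCompactSupport ψ)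
    (hu : Continuous u) : Integrable fun y => lapl ψ y * u y :=
  ((continuous_lapl hψ).mul hu).integrable_of_hasCompactSupport
    (hasCompactSupport_lapl hψc).mul_right

lemma integrable_inner_gradient {ψ : ℝ^d → ℝ} {F : ℝ^d → ℝ^d} (hψ : ContDiff ℝ 1 ψ)
    (hψc : HasCompactSupport ψ) (hF : Continuous F) : Integrable fun y => inner ℝ (∇ ψ y) (F y) :=
  ((continuous_gradient hψ).inner hF).integrable_of_hasCompactSupport
    ((hasCompactSupport_gradient hψc).mono fun y hy => by
      rw [Function.mem_support] at hy ⊢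
      exact fun h => hy (by rw [h, inner_zero_left]))

lemma integrable_lapl_add_inner_gradient_mul (σ : ℝ) {ψ u : ℝ^d → ℝ} {b : ℝ^d → ℝ^d}
    (hψ : ContDiff ℝ 2 ψ) (hψc : HasCompactSupport ψ) (hu : Continuous u) (hb : Continuous b) :
    Integrable fun y => (σ * lapl ψ y + inner ℝ (∇ ψ y) (b y)) * u y := by
  refine (((integrable_lapl_mul hψ hψc hu).const_mul σ).add
    (integrable_inner_gradient (hψ.of_le one_le_two) hψc (hu.smul hb))).congr
    (ae_of_all _ fun y => ?_)
  simp only [Pi.add_apply, Pi.smul_apply', inner_smul_right]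
  ring

lemma integral_mul_lapl_sub_diverg (σ : ℝ) {ψ u : ℝ^d → ℝ} {b : ℝ^d → ℝ^d} (hψ : ContDiff ℝ 2 ψ)
    (hψc : HasCompactSupport ψ) (hu : ContDiff ℝ 2 u) (hb : ContDiff ℝ 1 b) :
    ∫ y, ψ y * (σ * lapl u y - diverg (fun z => u z • b z) y)
      = ∫ y, (σ * lapl ψ y + inner ℝ (∇ ψ y) (b y)) * u y := by
  have hub : ContDiff ℝ 1 fun z => u z • b z := (hu.of_le one_le_two).smul hb
  have hψ₁ : ContDiff ℝ 1 ψ := hψ.of_le one_le_two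
  have hlapl : Integrable fun y => ψ y * lapl u y :=
    (hψ.continuous.mul (continuous_lapl hu)).integrable_of_hasCompactSupport hψc.mul_right
  have hdiv : Integrable fun y => ψ y * diverg (fun z => u z • b z) y :=
    (hψ.continuous.mul (continuous_diverg hub)).integrable_of_hasCompactSupport hψc.mul_right
  have hlapl' := integrable_lapl_mul hψ hψc hu.continuous
  have hgrad := integrable_inner_gradient hψ₁ hψc hub.continuous
  calc ∫ y, ψ y * (σ * lapl u y - diverg (fun z => u z • b z) y)
      = ∫ y, (σ * (ψ y * lapl u y) - ψ y * diverg (fun z => u z • b z) y) := by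
        congr 1 with y
        ring
    _ = σ * (∫ y, lapl ψ y * u y) + ∫ y, inner ℝ (∇ ψ y) (u y • b y) := by
        rw [integral_sub (hlapl.const_mul σ) hdiv, integral_const_mul,
          integral_mul_lapl hψ hψc hu, integral_mul_diverg hψ₁ hψc hub, sub_neg_eq_add]
    _ = ∫ y, (σ * lapl ψ y + inner ℝ (∇ ψ y) (b y)) * u y := by
        rw [← integral_const_mul, ← integral_add (hlapl'.const_mul σ) hgrad]
        congr 1 with y
        rw [inner_smul_right]
        ring

/-- A probability density `w` evolving on `[0,T]` by the linear drift-diffusion equation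
`∂_t w = σΔw − div(w b)` with a bounded `C¹` drift `b`. The aggregation equation is of this form,
with a drift depending on `w`. -/
structure IsDriftDiffusionSolution (σ T : ℝ) (b : ℝ → ℝ^d → ℝ^d) (w : ℝ → ℝ^d → ℝ) : Prop where
  contDiffOn : ContDiffOn ℝ 2 (fun p : ℝ × ℝ^d => w p.1 p.2) (Icc 0 T ×ˢ univ)
  integrable : ∀ t ∈ Icc 0 T, Integrable (w t)
  nonneg : ∀ t ∈ Icc 0 T, ∀ x, 0 ≤ w t x
  integral_eq_one : ∀ t ∈ Icc 0 T, ∫ x, w t x = 1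
  contDiff_drift : ∀ t ∈ Icc 0 T, ContDiff ℝ 1 (b t)
  exists_norm_drift_le : ∃ K, ∀ t ∈ Icc 0 T, ∀ x, ‖b t x‖ ≤ K
  hasDerivWithinAt : ∀ t ∈ Icc 0 T, ∀ x, HasDerivWithinAt (fun s => w s x)
    (σ * lapl (w t) x - diverg (fun z => w t z • b t z) x) (Icc 0 T) t

/-- The error made by localising the Gaussian test function of scale at least `τ` with a cutoff
whose derivatives are at most `1`, when the drift is bounded by `K`. -/
def cutoffErrorConst (d : ℕ) (σ τ K : ℝ) : ℝ :=
  τ ^ (-(d : ℝ) / 2) * (σ * (2 * gaussianGradConst d * τ ^ (-(1 : ℝ) / 2) + 1) + K)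

lemma IsCutoff.localization_error_le {R q σ G Γ L K : ℝ} {φ : ℝ^d → ℝ} (hφ : IsCutoff R q φ)
    (y : ℝ^d) {g v : ℝ^d} (hσ : 0 ≤ σ) (hG : 0 ≤ G) (hGΓ : G ≤ Γ) (hg : ‖g‖ ≤ L) (hv : ‖v‖ ≤ K) :
    σ * (2 * inner ℝ (∇ φ y) g + G * lapl φ y) + G * inner ℝ (∇ φ y) v
      ≤ q * (σ * (2 * L + Γ) + Γ * K) := by
  have hq : 0 ≤ q := (norm_nonneg _).trans (hφ.norm_gradient_le y)
  have hinner {u : ℝ^d} {c : ℝ} (hu : ‖u‖ ≤ c) : inner ℝ (∇ φ y) u ≤ q * c :=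
    (real_inner_le_norm _ _).trans (mul_le_mul (hφ.norm_gradient_le y) hu (norm_nonneg _) hq)
  have hlapl : G * lapl φ y ≤ Γ * q :=
    (mul_le_mul_of_nonneg_left ((le_abs_self _).trans (hφ.abs_lapl_le y)) hG).trans
      (mul_le_mul_of_nonneg_right hGΓ hq)
  have hdrift : G * inner ℝ (∇ φ y) v ≤ Γ * (q * K) :=
    (mul_le_mul_of_nonneg_left (hinner hv) hG).trans
      (mul_le_mul_of_nonneg_right hGΓ (mul_nonneg hq ((norm_nonneg v).trans hv)))
  calc σ * (2 * inner ℝ (∇ φ y) g + G * lapl φ y) + G * inner ℝ (∇ φ y) v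
      ≤ σ * (2 * (q * L) + Γ * q) + Γ * (q * K) := by
        gcongr
        exact hinner hg
    _ = q * (σ * (2 * L + Γ) + Γ * K) := by ring

lemma IsCutoff.test_function_le {R q σ r τ K β : ℝ} {φ : ℝ^d → ℝ} (hφ : IsCutoff R q φ)
    (hσ : 0 ≤ σ) (hτ : 0 < τ) (hτr : τ ≤ r) (x y : ℝ^d) {v : ℝ^d} (hK : ‖v‖ ≤ K) (hβ : ‖v‖ ≤ β) :
    σ * (2 * inner ℝ (∇ φ y) (∇ (fun z => gaussianKernel r (x - z)) y)
        + gaussianKernel r (x - y) * lapl φ y)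
      + inner ℝ (φ y • ∇ (fun z => gaussianKernel r (x - z)) y
        + gaussianKernel r (x - y) • ∇ φ y) v
    ≤ q * cutoffErrorConst d σ τ K
      + gaussianGradConst d * r ^ (-(1 : ℝ) / 2) * β * gaussianKernel (2 * r) (x - y) := by
  have hr : 0 < r := hτ.trans_le hτr
  have hc := (gaussianGradConst_pos d).le
  have hd : -(d : ℝ) / 2 ≤ 0 := div_nonpos_of_nonpos_of_nonneg (by simp) zero_le_two
  have hkernel {ρ : ℝ} (hρ : τ ≤ ρ) : gaussianKernel ρ (x - y) ≤ τ ^ (-(d : ℝ) / 2) :=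
    (gaussianKernel_le (hτ.trans_le hρ) _).trans (Real.rpow_le_rpow_of_nonpos hτ hρ hd)
  have hgrad := norm_gradient_gaussianKernel_sub_le hr x y
  have hgradτ : ‖∇ (fun z => gaussianKernel r (x - z)) y‖
      ≤ gaussianGradConst d * τ ^ (-(1 : ℝ) / 2) * τ ^ (-(d : ℝ) / 2) := by
    refine hgrad.trans ?_
    gcongr gaussianGradConst d * ?_ * ?_
    · exact (gaussianKernel_pos (by positivity) _).le
    · exact Real.rpow_le_rpow_of_nonpos hτ hτr (by norm_num)
    · exact hkernel (by linarith)
  have herror := hφ.localization_error_le y hσ (gaussianKernel_pos hr (x - y)).le (hkernel hτr)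
    hgradτ hK
  have hdrift : φ y * inner ℝ (∇ (fun z => gaussianKernel r (x - z)) y) v
      ≤ 1 * (gaussianGradConst d * r ^ (-(1 : ℝ) / 2) * gaussianKernel (2 * r) (x - y) * β) := by
    refine mul_le_mul_of_nonneg (hφ.le_one y) ?_ (hφ.nonneg y) ?_
    · exact (real_inner_le_norm _ _).trans
        (mul_le_mul hgrad hβ (norm_nonneg v) ((norm_nonneg _).trans hgrad))
    · exact mul_nonneg ((norm_nonneg _).trans hgrad) ((norm_nonneg v).trans hβ)
  rw [inner_add_left, real_inner_smul_left, real_inner_smul_left, cutoffErrorConst]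
  linarith

namespace IsDriftDiffusionSolution

variable {σ T : ℝ} {b : ℝ → ℝ^d → ℝ^d} {w : ℝ → ℝ^d → ℝ}

lemma contDiff (H : IsDriftDiffusionSolution σ T b w) {t : ℝ} (ht : t ∈ Icc 0 T) :
    ContDiff ℝ 2 (w t) :=
  contDiffOn_univ.1 <| H.contDiffOn.comp (contDiff_prodMk_right t).contDiffOn
    fun y _ => ⟨ht, mem_univ y⟩

lemma hasDerivAt (H : IsDriftDiffusionSolution σ T b w) {s : ℝ} (hs : s ∈ Ioo 0 T) (y : ℝ^d) :
    HasDerivAt (fun s => w s y) (σ * lapl (w s) y - diverg (fun z => w s z • b s z) y) s :=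
  (H.hasDerivWithinAt s (Ioo_subset_Icc_self hs) y).hasDerivAt (Icc_mem_nhds hs.1 hs.2)

lemma continuousOn_time_deriv (H : IsDriftDiffusionSolution σ T b w) :
    ContinuousOn (fun p : ℝ × ℝ^d => σ * lapl (w p.1) p.2
      - diverg (fun z => w p.1 z • b p.1 z) p.2) (Ioo 0 T ×ˢ univ) := by
  set U : ℝ × ℝ^d → ℝ := fun p => w p.1 p.2
  have hopen : IsOpen (Ioo 0 T ×ˢ (univ : Set ℝ^d)) := isOpen_Ioo.prod isOpen_univ
  have hU : ContDiffOn ℝ 2 U (Ioo 0 T ×ˢ univ) :=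
    H.contDiffOn.mono (prod_mono Ioo_subset_Icc_self subset_rfl)
  have hpartial : ContinuousOn (fun p => fderiv ℝ U p (1, 0)) (Ioo 0 T ×ˢ univ) :=
    (hU.continuousOn_fderiv_of_isOpen hopen (by norm_num)).clm_apply continuousOn_const
  refine hpartial.congr fun p hp => (H.hasDerivAt hp.1 p.2).unique ?_
  have hdiff : DifferentiableAt ℝ U p :=
    (hU.differentiableOn two_ne_zero).differentiableAt (hopen.mem_nhds hp)
  exact hdiff.hasFDerivAt.comp_hasDerivAt p.1
    ((hasDerivAt_id p.1).prodMk (hasDerivAt_const p.1 p.2))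

lemma hasDerivAt_integral_mul (H : IsDriftDiffusionSolution σ T b w) {I : Set ℝ} (hI : IsOpen I)
    (hIT : I ⊆ Ioo 0 T) {k : Set ℝ^d} (hk : IsCompact k) {ψ ψ' : ℝ → ℝ^d → ℝ}
    (hψ : ∀ s ∈ I, ContDiff ℝ 2 (ψ s))
    (hψc : ContinuousOn (Function.uncurry ψ) (I ×ˢ univ))
    (hψc' : ContinuousOn (Function.uncurry ψ') (I ×ˢ univ))
    (hderiv : ∀ s ∈ I, ∀ y, HasDerivAt (fun s => ψ s y) (ψ' s y) s)
    (hzero : ∀ s ∈ I, ∀ y ∉ k, ψ s y = 0) {s : ℝ} (hs : s ∈ I) :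
    HasDerivAt (fun s => ∫ y, ψ s y * w s y)
      (∫ y, (ψ' s y + (σ * lapl (ψ s) y + inner ℝ (∇ (ψ s) y) (b s y))) * w s y) s := by
  have hwc : ContinuousOn (Function.uncurry w) (I ×ˢ univ) :=
    H.contDiffOn.continuousOn.mono (prod_mono (hIT.trans Ioo_subset_Icc_self) subset_rfl)
  have hwc' : ContinuousOn (Function.uncurry fun s y => σ * lapl (w s) y
      - diverg (fun z => w s z • b s z) y) (I ×ˢ univ) :=
    H.continuousOn_time_deriv.mono (prod_mono hIT subset_rfl)
  have hsT := Ioo_subset_Icc_self (hIT hs)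
  have hw := H.contDiff hsT
  have hb := H.contDiff_drift s hsT
  have hψs : HasCompactSupport (ψ s) := HasCompactSupport.intro hk (hzero s hs)
  have hψs' : HasCompactSupport (ψ' s) := HasCompactSupport.intro hk fun y hy =>
    hasDerivAt_eq_zero_of_eqOn_zero hI hs (hderiv s hs y) fun u hu => hzero u hu y hy
  refine (hasDerivAt_integral_of_isCompact hI hk (f := fun s y => ψ s y * w s y)
    (f' := fun s y => ψ' s y * w s y
      + ψ s y * (σ * lapl (w s) y - diverg (fun z => w s z • b s z) y))
    (hψc.mul hwc) ((hψc'.mul hwc).add (hψc.mul hwc'))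
    (fun u hu y => (hderiv u hu y).mul (H.hasDerivAt (hIT hu) y))
    (fun u hu y hy => by rw [hzero u hu y hy, zero_mul]) hs).congr_deriv ?_
  have hint' : Integrable fun y => ψ' s y * w s y :=
    ((continuous_slice hψc' hs).mul hw.continuous).integrable_of_hasCompactSupport hψs'.mul_right
  have hint : Integrable fun y =>
      ψ s y * (σ * lapl (w s) y - diverg (fun z => w s z • b s z) y) :=
    ((continuous_slice hψc hs).mul (continuous_slice hwc' hs)).integrable_of_hasCompactSupport
      hψs.mul_right
  have hadj := integrable_lapl_add_inner_gradient_mul σ (hψ s hs) hψs hw.continuous hb.continuous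
  rw [integral_add hint' hint, integral_mul_lapl_sub_diverg σ (hψ s hs) hψs hw hb,
    ← integral_add hint' hadj]
  congr 1 with y
  ring

end IsDriftDiffusionSolution

lemma continuousOn_lapl_gaussianKernel_sub {r : ℝ → ℝ} {I : Set ℝ} (hr : ContinuousOn r I)
    (hpos : ∀ s ∈ I, 0 < r s) (x : ℝ^d) :
    ContinuousOn (fun p : ℝ × ℝ^d => lapl (fun y => gaussianKernel (r p.1) (x - y)) p.2)
      (I ×ˢ univ) := by
  have hr' : ContinuousOn (fun p : ℝ × ℝ^d => r p.1) (I ×ˢ univ) :=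
    hr.comp continuousOn_fst fun p hp => hp.1
  have hne : ∀ p ∈ I ×ˢ (univ : Set ℝ^d), r p.1 ≠ 0 := fun p hp => (hpos p.1 hp.1).ne'
  simp only [lapl_gaussianKernel_sub]
  exact (((continuousOn_const.div hr' hne).neg).add ((continuousOn_const.div (hr'.pow 2)
    fun p hp => pow_ne_zero 2 (hne p hp)).mul (by fun_prop))).mul
    (continuousOn_gaussianKernel_sub hr hpos x)

lemma tendsto_integral_cutoff_mul {φ : ℕ → ℝ^d → ℝ} {q : ℕ → ℝ} {f : ℝ^d → ℝ}
    (hφ : ∀ n : ℕ, IsCutoff ((n : ℝ) + 1) (q n) (φ n)) (hf : Integrable f) :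
    Tendsto (fun n => ∫ y, φ n y * f y) atTop (𝓝 (∫ y, f y)) := by
  refine tendsto_integral_of_dominated_convergence (fun y => ‖f y‖)
    (fun n => (hφ n).contDiff.continuous.aestronglyMeasurable.mul hf.aestronglyMeasurable) hf.norm
    (fun n => ae_of_all _ fun y => ?_) (ae_of_all _ fun y => tendsto_const_nhds.congr' ?_)
  · rw [norm_mul, Real.norm_of_nonneg ((hφ n).nonneg y)]
    exact mul_le_of_le_one_left (norm_nonneg _) ((hφ n).le_one y)
  · obtain ⟨N, hN⟩ := exists_nat_ge ‖y‖
    filter_upwards [eventually_ge_atTop N] with n hn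
    have hNn : (N : ℝ) ≤ n := Nat.cast_le.2 hn
    rw [(hφ n).eq_one y (by linarith), one_mul]

lemma integral_mul_gaussianKernel_mul_le_gaussianAverage {τ : ℝ} {φ u : ℝ^d → ℝ} (hτ : 0 < τ)
    (hφ : ∀ y, φ y ≤ 1) (hu : Integrable u) (hu₀ : ∀ y, 0 ≤ u y) (x : ℝ^d) :
    ∫ y, φ y * gaussianKernel τ (x - y) * u y ≤ gaussianAverage τ u x := by
  have hterm (y : ℝ^d) : 0 ≤ gaussianKernel τ (x - y) * u y :=
    mul_nonneg (gaussianKernel_pos hτ _).le (hu₀ y)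
  refine integral_mono_of_nonneg_right hterm (integrable_gaussianKernel_sub_mul hτ hu x)
    fun y => ?_
  rw [mul_assoc]
  exact mul_le_of_le_one_left (hterm y) (hφ y)

namespace IsDriftDiffusionSolution

variable {σ T : ℝ} {b : ℝ → ℝ^d → ℝ^d} {w : ℝ → ℝ^d → ℝ}

-- The kernel `G_{4σ(t-s)+τ}` solves the backward heat equation in `s`, so only the drift and the
-- derivatives of the cutoff survive.
lemma hasDerivAt_integral_cutoff_mul_gaussianKernel (H : IsDriftDiffusionSolution σ T b w)
    (hσ : 0 ≤ σ) {t τ : ℝ} (htT : t ≤ T) (hτ : 0 < τ) (x : ℝ^d) {φ : ℝ^d → ℝ}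
    (hφ : ContDiff ℝ 2 φ) (hφc : HasCompactSupport φ) {s r : ℝ} (hs : s ∈ Ioo 0 t)
    (hr : r = 4 * σ * (t - s) + τ) :
    HasDerivAt (fun s => ∫ y, φ y * gaussianKernel (4 * σ * (t - s) + τ) (x - y) * w s y)
      (∫ y, (σ * (2 * inner ℝ (∇ φ y) (∇ (fun z => gaussianKernel r (x - z)) y)
          + gaussianKernel r (x - y) * lapl φ y)
        + inner ℝ (φ y • ∇ (fun z => gaussianKernel r (x - z)) y
          + gaussianKernel r (x - y) • ∇ φ y) (b s y)) * w s y) s := by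
  subst hr
  set ρ : ℝ → ℝ := fun s => 4 * σ * (t - s) + τ
  have hρc : ContinuousOn ρ (Ioo 0 t) := by fun_prop
  have hρ : ∀ u ∈ Ioo 0 t, 0 < ρ u := fun u hu =>
    add_pos_of_nonneg_of_pos (mul_nonneg (by positivity) (sub_nonneg.2 hu.2.le)) hτ
  have hG (u : ℝ) : ContDiff ℝ 2 fun y => gaussianKernel (ρ u) (x - y) :=
    contDiff_gaussianKernel_sub _ x
  have hφ₂ : ContinuousOn (fun p : ℝ × ℝ^d => φ p.2) (Ioo 0 t ×ˢ univ) :=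
    (hφ.continuous.comp continuous_snd).continuousOn
  refine (H.hasDerivAt_integral_mul isOpen_Ioo (Ioo_subset_Ioo_right htT) hφc.isCompact
    (ψ := fun s y => φ y * gaussianKernel (ρ s) (x - y))
    (ψ' := fun s y => φ y * (lapl (fun y => gaussianKernel (ρ s) (x - y)) y * -σ))
    (fun u _ => hφ.mul (hG u))
    (hφ₂.mul (continuousOn_gaussianKernel_sub hρc hρ x))
    (hφ₂.mul ((continuousOn_lapl_gaussianKernel_sub hρc hρ x).mul continuousOn_const))
    (fun u hu y => ?_) (fun u _ y hy => ?_) hs).congr_deriv (integral_congr_ae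
      (ae_of_all _ fun y => ?_))
  · have hρ' : HasDerivAt ρ (4 * σ * (-1)) u :=
      (((hasDerivAt_id u).const_sub t).const_mul (4 * σ)).add_const τ
    refine (((hasDerivAt_gaussianKernel_sub (hρ u hu) x y).comp u hρ').const_mul
      (φ y)).congr_deriv ?_
    ring
  · rw [image_eq_zero_of_notMem_tsupport hy, zero_mul]
  · simp only [lapl_mul hφ (hG s) y, gradient_mul (hφ.differentiable two_ne_zero y)
      ((hG s).differentiable two_ne_zero y)]
    ring

lemma integral_test_function_le (H : IsDriftDiffusionSolution σ T b w) (hσ : 0 ≤ σ)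
    {s r τ q R K β m : ℝ} (hs : s ∈ Icc 0 T) (hτ : 0 < τ) (hτr : τ ≤ r) (x : ℝ^d) {φ : ℝ^d → ℝ}
    (hφ : IsCutoff R q φ) (hK : ∀ y, ‖b s y‖ ≤ K) (hβ : ∀ y, ‖b s y‖ ≤ β)
    (hm : gaussianAverage (2 * r) (w s) x ≤ m) :
    ∫ y, (σ * (2 * inner ℝ (∇ φ y) (∇ (fun z => gaussianKernel r (x - z)) y)
          + gaussianKernel r (x - y) * lapl φ y)
        + inner ℝ (φ y • ∇ (fun z => gaussianKernel r (x - z)) y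
          + gaussianKernel r (x - y) • ∇ φ y) (b s y)) * w s y
      ≤ q * cutoffErrorConst d σ τ K + gaussianGradConst d * r ^ (-(1 : ℝ) / 2) * β * m := by
  have hr : 0 < r := hτ.trans_le hτr
  have hq : 0 ≤ q := (norm_nonneg _).trans (hφ.norm_gradient_le 0)
  have hK0 : 0 ≤ K := (norm_nonneg _).trans (hK 0)
  have hβ0 : 0 ≤ β := (norm_nonneg _).trans (hβ 0)
  have hc := gaussianGradConst_pos d
  have hw := H.integrable s hs
  have havg := integrable_gaussianKernel_sub_mul (mul_pos two_pos hr) hw x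
  set e := q * cutoffErrorConst d σ τ K
  set c := gaussianGradConst d * r ^ (-(1 : ℝ) / 2) * β
  have he : 0 ≤ e := mul_nonneg hq (by unfold cutoffErrorConst; positivity)
  calc ∫ y, (σ * (2 * inner ℝ (∇ φ y) (∇ (fun z => gaussianKernel r (x - z)) y)
          + gaussianKernel r (x - y) * lapl φ y)
        + inner ℝ (φ y • ∇ (fun z => gaussianKernel r (x - z)) y
          + gaussianKernel r (x - y) • ∇ φ y) (b s y)) * w s y
      ≤ ∫ y, (e * w s y + c * (gaussianKernel (2 * r) (x - y) * w s y)) := by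
        refine integral_mono_of_nonneg_right (fun y => ?_) ((hw.const_mul e).add
          (havg.const_mul c)) fun y => ?_
        · have hw0 := H.nonneg s hs y
          have hG := gaussianKernel_pos (mul_pos two_pos hr) (x - y)
          positivity
        · refine (mul_le_mul_of_nonneg_right (hφ.test_function_le hσ hτ hτr x y (hK y) (hβ y))
            (H.nonneg s hs y)).trans_eq ?_
          ring
    _ = e + c * gaussianAverage (2 * r) (w s) x := by
        rw [integral_add (hw.const_mul e) (havg.const_mul c), integral_const_mul,
          integral_const_mul, H.integral_eq_one s hs, mul_one]
        rfl
    _ ≤ e + c * m := by gcongr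

lemma continuousOn_integral_cutoff_mul_gaussianKernel (H : IsDriftDiffusionSolution σ T b w)
    (hσ : 0 ≤ σ) {t τ : ℝ} (htT : t ≤ T) (hτ : 0 < τ) (x : ℝ^d) {φ : ℝ^d → ℝ}
    (hφ : Continuous φ) (hφc : HasCompactSupport φ) :
    ContinuousOn (fun s => ∫ y, φ y * gaussianKernel (4 * σ * (t - s) + τ) (x - y) * w s y)
      (Icc 0 t) := by
  refine continuousOn_integral_of_compact_support (k := tsupport φ) hφc.isCompact ?_ ?_
  · have hG := continuousOn_gaussianKernel_sub (r := fun s => 4 * σ * (t - s) + τ) (I := Icc 0 t)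
      (by fun_prop) (fun s hs => add_pos_of_nonneg_of_pos
        (mul_nonneg (by positivity) (sub_nonneg.2 hs.2)) hτ) x
    exact ((hφ.comp continuous_snd).continuousOn.mul hG).mul
      (H.contDiffOn.continuousOn.mono (prod_mono (Icc_subset_Icc_right htT) subset_rfl))
  · intro s y _ hy
    rw [image_eq_zero_of_notMem_tsupport hy, zero_mul, zero_mul]

-- `B` is an antiderivative of a majorant of the drift term.
lemma integral_cutoff_mul_gaussianKernel_le (H : IsDriftDiffusionSolution σ T b w) (hσ : 0 ≤ σ)
    {t₁ t₂ τ m q R K : ℝ} {β B B' : ℝ → ℝ} (h₁ : 0 ≤ t₁) (h₁₂ : t₁ ≤ t₂) (h₂ : t₂ ≤ T)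
    (hτ : 0 < τ) (x : ℝ^d) (hK : ∀ t ∈ Icc 0 T, ∀ x, ‖b t x‖ ≤ K)
    (hβ : ∀ s ∈ Ioo t₁ t₂, ∀ y, ‖b s y‖ ≤ β s)
    (hm : ∀ s ∈ Ioo t₁ t₂, gaussianAverage (2 * (4 * σ * (t₂ - s) + τ)) (w s) x ≤ m)
    (hBc : ContinuousOn B (Icc t₁ t₂)) (hB : ∀ s ∈ Ioo t₁ t₂, HasDerivAt B (B' s) s)
    (hB' : ∀ s ∈ Ioo t₁ t₂, gaussianGradConst d * (4 * σ * (t₂ - s) + τ) ^ (-(1 : ℝ) / 2) * β s * m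
      ≤ B' s) {φ : ℝ^d → ℝ} (hφ : IsCutoff R q φ) :
    ∫ y, φ y * gaussianKernel τ (x - y) * w t₂ y
      ≤ gaussianAverage (4 * σ * (t₂ - t₁) + τ) (w t₁) x + (B t₂ - B t₁)
        + q * cutoffErrorConst d σ τ K * (t₂ - t₁) := by
  set Q := q * cutoffErrorConst d σ τ K
  set F : ℝ → ℝ := fun s => ∫ y, φ y * gaussianKernel (4 * σ * (t₂ - s) + τ) (x - y) * w s y
    with hF
  have hscale (s : ℝ) (hs : s ≤ t₂) : τ ≤ 4 * σ * (t₂ - s) + τ :=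
    le_add_of_nonneg_left (mul_nonneg (by positivity) (sub_nonneg.2 hs))
  have hFc : ContinuousOn F (Icc t₁ t₂) :=
    (H.continuousOn_integral_cutoff_mul_gaussianKernel hσ h₂ hτ x hφ.contDiff.continuous
      hφ.hasCompactSupport).mono (Icc_subset_Icc_left h₁)
  have hanti : AntitoneOn (fun s => F s - B s - Q * s) (Icc t₁ t₂) := by
    refine antitoneOn_of_deriv_nonpos (convex_Icc _ _) ((hFc.sub hBc).sub (by fun_prop)) ?_ ?_
    all_goals
      intro s hs
      rw [interior_Icc] at hs
      have hs₀ : s ∈ Ioo 0 t₂ := ⟨h₁.trans_lt hs.1, hs.2⟩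
      have hsT : s ∈ Icc 0 T := ⟨hs₀.1.le, hs.2.le.trans h₂⟩
      have hderiv := ((H.hasDerivAt_integral_cutoff_mul_gaussianKernel hσ h₂ hτ x hφ.contDiff
        hφ.hasCompactSupport hs₀ rfl).sub (hB s hs)).sub ((hasDerivAt_id s).const_mul Q)
    · exact hderiv.differentiableAt.differentiableWithinAt
    · have hbound := H.integral_test_function_le hσ hsT hτ (hscale s hs.2.le) x hφ (hK s hsT)
        (hβ s hs) (hm s hs)
      refine hderiv.deriv.trans_le ?_
      linarith [hB' s hs]
  have ht₁ : t₁ ∈ Icc 0 T := ⟨h₁, h₁₂.trans h₂⟩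
  have hstart : F t₁ ≤ gaussianAverage (4 * σ * (t₂ - t₁) + τ) (w t₁) x :=
    integral_mul_gaussianKernel_mul_le_gaussianAverage (hτ.trans_le (hscale t₁ h₁₂))
      hφ.le_one (H.integrable t₁ ht₁) (H.nonneg t₁ ht₁) x
  have hend : F t₂ = ∫ y, φ y * gaussianKernel τ (x - y) * w t₂ y := by
    simp only [hF, sub_self, mul_zero, zero_add]
  have := hanti (left_mem_Icc.2 h₁₂) (right_mem_Icc.2 h₁₂) h₁₂
  rw [← hend]
  linarith

lemma gaussianAverage_le_add (H : IsDriftDiffusionSolution σ T b w) (hσ : 0 ≤ σ)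
    {t₁ t₂ τ m : ℝ} {β B B' : ℝ → ℝ} (h₁ : 0 ≤ t₁) (h₁₂ : t₁ ≤ t₂) (h₂ : t₂ ≤ T) (hτ : 0 < τ)
    (x : ℝ^d) (hβ : ∀ s ∈ Ioo t₁ t₂, ∀ y, ‖b s y‖ ≤ β s)
    (hm : ∀ s ∈ Ioo t₁ t₂, gaussianAverage (2 * (4 * σ * (t₂ - s) + τ)) (w s) x ≤ m)
    (hBc : ContinuousOn B (Icc t₁ t₂)) (hB : ∀ s ∈ Ioo t₁ t₂, HasDerivAt B (B' s) s)
    (hB' : ∀ s ∈ Ioo t₁ t₂, gaussianGradConst d * (4 * σ * (t₂ - s) + τ) ^ (-(1 : ℝ) / 2) * β s * m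
      ≤ B' s) :
    gaussianAverage τ (w t₂) x
      ≤ gaussianAverage (4 * σ * (t₂ - t₁) + τ) (w t₁) x + (B t₂ - B t₁) := by
  obtain ⟨K, hK⟩ := H.exists_norm_drift_le
  obtain ⟨C, hcut⟩ := exists_isCutoff d
  choose φ hφ using fun n : ℕ => hcut ((n : ℝ) + 1) (le_add_of_nonneg_left n.cast_nonneg)
  have hlocal (n : ℕ) := H.integral_cutoff_mul_gaussianKernel_le hσ h₁ h₁₂ h₂ hτ x hK hβ hm hBc hB
    hB' (hφ n)
  have hleft := tendsto_integral_cutoff_mul hφ (integrable_gaussianKernel_sub_mul hτ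
    (H.integrable t₂ ⟨h₁.trans h₁₂, h₂⟩) x)
  have herror : Tendsto (fun n : ℕ => C / ((n : ℝ) + 1)) atTop (𝓝 0) := by
    simpa [div_eq_mul_inv] using (tendsto_one_div_add_atTop_nhds_zero_nat (𝕜 := ℝ)).const_mul C
  have hright := ((herror.mul_const (cutoffErrorConst d σ τ K)).mul_const (t₂ - t₁)).const_add
    (gaussianAverage (4 * σ * (t₂ - t₁) + τ) (w t₁) x + (B t₂ - B t₁))
  rw [zero_mul, zero_mul, add_zero] at hright
  exact le_of_tendsto_of_tendsto' hleft hright fun n => by simpa only [mul_assoc] using hlocal n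

lemma gaussianAverage_le_add_of_norm_drift_le (H : IsDriftDiffusionSolution σ T b w) (hσ : 0 ≤ σ)
    {t₁ t₂ τ m K : ℝ} (h₁ : 0 ≤ t₁) (h₁₂ : t₁ ≤ t₂) (h₂ : t₂ ≤ T) (hτ : 0 < τ) (hm₀ : 0 ≤ m)
    (x : ℝ^d) (hK : ∀ t ∈ Icc 0 T, ∀ x, ‖b t x‖ ≤ K)
    (hm : ∀ s ∈ Ioo t₁ t₂, gaussianAverage (2 * (4 * σ * (t₂ - s) + τ)) (w s) x ≤ m) :
    gaussianAverage τ (w t₂) x ≤ gaussianAverage (4 * σ * (t₂ - t₁) + τ) (w t₁) x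
      + gaussianGradConst d * τ ^ (-(1 : ℝ) / 2) * K * m * (t₂ - t₁) := by
  have hK₀ : 0 ≤ K := (norm_nonneg _).trans (hK t₁ ⟨h₁, h₁₂.trans h₂⟩ 0)
  have hc := gaussianGradConst_pos d
  refine (H.gaussianAverage_le_add hσ h₁ h₁₂ h₂ hτ x (β := fun _ => K)
    (B := fun s => gaussianGradConst d * τ ^ (-(1 : ℝ) / 2) * K * m * s)
    (fun s hs => hK s ⟨h₁.trans hs.1.le, hs.2.le.trans h₂⟩) hm (by fun_prop)
    (fun s _ => (hasDerivAt_id s).const_mul _) fun s hs => ?_).trans_eq (by ring)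
  have hscale : (4 * σ * (t₂ - s) + τ) ^ (-(1 : ℝ) / 2) ≤ τ ^ (-(1 : ℝ) / 2) :=
    Real.rpow_le_rpow_of_nonpos hτ
      (le_add_of_nonneg_left (mul_nonneg (by positivity) (sub_nonneg.2 hs.2.le))) (by norm_num)
  rw [mul_one]
  gcongr

end IsDriftDiffusionSolution

lemma inv_sqrt_mul_inv_sqrt_sub_le {s t : ℝ} (hs : 0 < s) (hst : s < t) :
    (√(t - s))⁻¹ * (√s)⁻¹ ≤ √(2 / t) * ((√s)⁻¹ + (√(t - s))⁻¹) := by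
  have ht : 0 < t := hs.trans hst
  have hlarge (u : ℝ) (hu : t / 2 ≤ u) : (√u)⁻¹ ≤ √(2 / t) := by
    rw [← Real.sqrt_inv, ← inv_div]
    exact Real.sqrt_le_sqrt (inv_anti₀ (by positivity) hu)
  have hs' : 0 ≤ (√s)⁻¹ := by positivity
  have hts' : 0 ≤ (√(t - s))⁻¹ := by positivity
  have h2t := Real.sqrt_nonneg (2 / t)
  rcases le_total (t / 2) s with hhalf | hhalf
  · nlinarith [mul_le_mul_of_nonneg_left (hlarge s hhalf) hts', mul_nonneg h2t hs']
  · nlinarith [mul_le_mul_of_nonneg_right (hlarge (t - s) (by linarith)) hs', mul_nonneg h2t hts']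

/-- The constant in the Duhamel estimate for a drift of size `ε / √s`: the gradient constant of the
heat kernel times a bound for `∫₀ᵗ (4σ(t - s))^{-1/2} s^{-1/2} ds`. -/
def duhamelConst (d : ℕ) (σ : ℝ) : ℝ := gaussianGradConst d * (√(4 * σ))⁻¹ * (4 * √2)

lemma duhamelConst_pos (d : ℕ) {σ : ℝ} (hσ : 0 < σ) : 0 < duhamelConst d σ := by
  have := gaussianGradConst_pos d
  unfold duhamelConst
  positivity

lemma rpow_neg_half_add_le {σ u τ : ℝ} (hσ : 0 < σ) (hu : 0 < u) (hτ : 0 ≤ τ) :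
    (4 * σ * u + τ) ^ (-(1 : ℝ) / 2) ≤ (√(4 * σ))⁻¹ * (√u)⁻¹ := by
  calc (4 * σ * u + τ) ^ (-(1 : ℝ) / 2) ≤ (4 * σ * u) ^ (-(1 : ℝ) / 2) :=
        Real.rpow_le_rpow_of_nonpos (by positivity) (by linarith) (by norm_num)
    _ = (√(4 * σ))⁻¹ * (√u)⁻¹ := by
        rw [neg_div, Real.rpow_neg (by positivity), ← Real.sqrt_eq_rpow,
          Real.sqrt_mul (by positivity), mul_inv]

lemma hasDerivAt_two_sqrt_sub_two_sqrt {s t : ℝ} (hs : s ∈ Ioo 0 t) :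
    HasDerivAt (fun s => 2 * √s - 2 * √(t - s)) ((√s)⁻¹ + (√(t - s))⁻¹) s := by
  have hleft := (Real.hasDerivAt_sqrt hs.1.ne').const_mul 2
  have hright := (((hasDerivAt_id s).const_sub t).sqrt (sub_pos.2 hs.2).ne').const_mul 2
  refine (hleft.sub hright).congr_deriv ?_
  simp only [id]
  ring

lemma IsDriftDiffusionSolution.gaussianAverage_le_add_of_norm_drift_le_div_sqrt {σ T : ℝ}
    {b : ℝ → ℝ^d → ℝ^d} {w : ℝ → ℝ^d → ℝ} (H : IsDriftDiffusionSolution σ T b w) (hσ : 0 < σ)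
    {t τ m ε : ℝ} (ht : 0 < t) (htT : t ≤ T) (hτ : 0 < τ) (hm₀ : 0 ≤ m) (hε : 0 ≤ ε) (x : ℝ^d)
    (hβ : ∀ s ∈ Ioo 0 t, ∀ y, ‖b s y‖ ≤ ε / √s)
    (hm : ∀ s ∈ Ioo 0 t, gaussianAverage (2 * (4 * σ * (t - s) + τ)) (w s) x ≤ m) :
    gaussianAverage τ (w t) x
      ≤ gaussianAverage (4 * σ * t + τ) (w 0) x + duhamelConst d σ * ε * m := by
  set c := gaussianGradConst d * (√(4 * σ))⁻¹ * ε * m with hc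
  have hgrad := gaussianGradConst_pos d
  have hc₀ : 0 ≤ c := by positivity
  refine (H.gaussianAverage_le_add hσ.le le_rfl ht.le htT hτ x (β := fun s => ε / √s)
    (B := fun s => c * √(2 / t) * (2 * √s - 2 * √(t - s))) hβ hm (by fun_prop)
    (fun s hs => (hasDerivAt_two_sqrt_sub_two_sqrt hs).const_mul _) fun s hs => ?_).trans_eq ?_
  · calc gaussianGradConst d * (4 * σ * (t - s) + τ) ^ (-(1 : ℝ) / 2) * (ε / √s) * m
        ≤ gaussianGradConst d * ((√(4 * σ))⁻¹ * (√(t - s))⁻¹) * (ε / √s) * m := by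
          gcongr
          exact rpow_neg_half_add_le hσ (sub_pos.2 hs.2) hτ.le
      _ = c * ((√(t - s))⁻¹ * (√s)⁻¹) := by ring
      _ ≤ c * (√(2 / t) * ((√s)⁻¹ + (√(t - s))⁻¹)) :=
          mul_le_mul_of_nonneg_left (inv_sqrt_mul_inv_sqrt_sub_le hs.1 hs.2) hc₀
      _ = _ := by ring
  · have hsqrt : √(2 / t) * √t = √2 := by
      rw [← Real.sqrt_mul (by positivity), div_mul_cancel₀ _ ht.ne']
    simp only [sub_self, sub_zero, Real.sqrt_zero, duhamelConst, ← hsqrt, hc]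
    ring

/-- The Gaussian averages of `f` at scales `τ ≥ δ` are at most `Z (ρ + τ)^{-a}`. For `ρ = 0` this is
a Morrey-type bound on `f`, truncated at the scale `δ`; a solution started from such data satisfies
it at time `s` with `ρ = 4σs`. -/
def HasGaussianMorreyBound (a ρ δ Z : ℝ) (f : ℝ^d → ℝ) : Prop :=
  ∀ τ, δ ≤ τ → ∀ x, (ρ + τ) ^ a * gaussianAverage τ f x ≤ Z

/-- The drift `b` is of size `c Z / √(4σs)` whenever `w` satisfies a Morrey bound with constant `Z`,
up to an error `e` that can be made small by asking for the bound at sufficiently small scales. -/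
def IsControlledDrift (σ T a c : ℝ) (b : ℝ → ℝ^d → ℝ^d) (w : ℝ → ℝ^d → ℝ) : Prop :=
  ∀ e : ℝ, 0 < e → ∃ δ : ℝ, 0 < δ ∧ ∀ s ∈ Ioc (0 : ℝ) T, ∀ Z : ℝ, 0 ≤ Z →
    HasGaussianMorreyBound a (4 * σ * s) δ Z (w s) → ∀ x, ‖b s x‖ ≤ c * Z / √(4 * σ * s) + e

lemma IsControlledDrift.exists_norm_le_div_sqrt {σ T a c M : ℝ} {b : ℝ → ℝ^d → ℝ^d}
    {w : ℝ → ℝ^d → ℝ} (hctl : IsControlledDrift σ T a c b w) (hσ : 0 < σ) (hT : 0 < T) (hc : 0 < c)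
    (hM : 0 < M) :
    ∃ δ : ℝ, 0 < δ ∧ ∀ s ∈ Ioc (0 : ℝ) T,
      HasGaussianMorreyBound a (4 * σ * s) δ (3 * M) (w s) →
        ∀ x, ‖b s x‖ ≤ 2 * c * M / √σ / √s := by
  obtain ⟨δ, hδ, hdrift⟩ := hctl (c * M / √(4 * σ * T)) (by positivity)
  refine ⟨δ, hδ, fun s hs hbound x => ?_⟩
  have hs₀ : 0 < s := hs.1
  have hsqrt : √(4 * σ * s) = 2 * (√σ * √s) := by
    rw [mul_assoc, Real.sqrt_mul zero_le_four, Real.sqrt_mul hσ.le,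
      show (4 : ℝ) = 2 ^ 2 by norm_num, Real.sqrt_sq zero_le_two]
  calc ‖b s x‖ ≤ c * (3 * M) / √(4 * σ * s) + c * M / √(4 * σ * T) :=
        hdrift s hs _ (by positivity) hbound x
    _ ≤ c * (3 * M) / √(4 * σ * s) + c * M / √(4 * σ * s) := by
        gcongr
        exact hs.2
    _ = 2 * c * M / √σ / √s := by
        rw [hsqrt]
        field_simp
        norm_num

lemma rpow_mul_rpow_neg_le {a κ ρ₀ ρ δ τ : ℝ} (ha : 0 ≤ a) (haκ : a ≤ κ) (hρ₀ : 0 ≤ ρ) (hρ : ρ ≤ ρ₀)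
    (hδ : 0 < δ) (hτ : δ ≤ τ) :
    (ρ + τ) ^ a * τ ^ (-κ) ≤ (ρ₀ / δ + 1) ^ a * δ ^ (a - κ) := by
  have hτ₀ : 0 < τ := hδ.trans_le hτ
  have hρ₀' : 0 ≤ ρ₀ := hρ₀.trans hρ
  have hbase : ρ + τ ≤ (ρ₀ / δ + 1) * τ := by
    have : ρ₀ ≤ ρ₀ / δ * τ := by
      rw [div_mul_eq_mul_div, le_div_iff₀ hδ]
      gcongr
    linarith
  calc (ρ + τ) ^ a * τ ^ (-κ) ≤ ((ρ₀ / δ + 1) * τ) ^ a * τ ^ (-κ) := by gcongr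
    _ = (ρ₀ / δ + 1) ^ a * τ ^ (a - κ) := by
        rw [Real.mul_rpow (by positivity) hτ₀.le, mul_assoc, ← Real.rpow_add hτ₀, sub_eq_add_neg]
    _ ≤ (ρ₀ / δ + 1) ^ a * δ ^ (a - κ) := by
        gcongr ?_ * ?_
        exact Real.rpow_le_rpow_of_nonpos hδ hτ (sub_nonpos.2 haκ)

lemma forall_mem_Icc_of_improve_of_extend {P Q : ℝ → Prop} {T h : ℝ} (hh : 0 < h) (h₀ : P 0)
    (improve : ∀ t ∈ Ioc 0 T, (∀ s ∈ Ioo 0 t, Q s) → P t)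
    (extend : ∀ t s, 0 ≤ t → t ≤ s → s ≤ T → s ≤ t + h → P t → Q s) :
    ∀ t ∈ Icc 0 T, P t := by
  have hsteps (n : ℕ) : ∀ t ∈ Icc 0 T, t ≤ n * h → P t := by
    induction n with
    | zero =>
      intro t ht hle
      obtain rfl : t = 0 := le_antisymm (by simpa using hle) ht.1
      exact h₀
    | succ n ih =>
      intro t ht hle
      rcases ht.1.eq_or_lt with rfl | ht₀
      · exact h₀
      refine improve t ⟨ht₀, ht.2⟩ fun s hs => ?_
      have hsT : s ≤ T := hs.2.le.trans ht.2
      have hback : max 0 (s - h) ≤ s := max_le hs.1.le (by linarith)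
      refine extend (max 0 (s - h)) s (le_max_left _ _) hback hsT
        (by linarith [le_max_right 0 (s - h)])
        (ih _ ⟨le_max_left _ _, hback.trans hsT⟩ (max_le (by positivity) ?_))
      push_cast at hle
      linarith [hs.2]
  intro t ht
  obtain ⟨n, hn⟩ := exists_nat_ge (t / h)
  exact hsteps n t ht ((div_le_iff₀ hh).1 hn)

lemma forall_le_two_mul_of_improve {ι : Type*} {S : Set ι} {f : ι → ℝ} {A : ℝ}
    (hbdd : BddAbove (f '' S)) (improve : ∀ m, (∀ i ∈ S, f i ≤ m) → ∀ i ∈ S, f i ≤ A + m / 2) :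
    ∀ i ∈ S, f i ≤ 2 * A := by
  intro i hi
  have hle : ∀ j ∈ S, f j ≤ sSup (f '' S) := fun j hj => le_csSup hbdd (mem_image_of_mem f hj)
  have hsup : sSup (f '' S) ≤ A + sSup (f '' S) / 2 :=
    csSup_le ⟨f i, mem_image_of_mem f hi⟩ (forall_mem_image.2 (improve _ hle))
  linarith [hle i hi]

namespace IsDriftDiffusionSolution

variable {σ T : ℝ} {b : ℝ → ℝ^d → ℝ^d} {w : ℝ → ℝ^d → ℝ}

lemma gaussianAverage_le_rpow (H : IsDriftDiffusionSolution σ T b w) {s δ τ : ℝ}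
    (hs : s ∈ Icc 0 T) (hδ : 0 < δ) (hτ : δ ≤ τ) (x : ℝ^d) :
    gaussianAverage τ (w s) x ≤ δ ^ (-(d : ℝ) / 2) := by
  refine (gaussianAverage_le_rpow_mul_integral (hδ.trans_le hτ) (H.integrable s hs) (H.nonneg s hs)
    x).trans ?_
  rw [H.integral_eq_one s hs, mul_one]
  exact Real.rpow_le_rpow_of_nonpos hδ hτ
    (div_nonpos_of_nonpos_of_nonneg (by simp) zero_le_two)

lemma hasGaussianMorreyBound_improve (H : IsDriftDiffusionSolution σ T b w) (hσ : 0 < σ)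
    {a δ M ε s : ℝ} (ha : 0 ≤ a) (hδ : 0 < δ) (hM : 0 ≤ M) (hε : 0 ≤ ε)
    (hsmall : duhamelConst d σ * ε ≤ 1 / 3) (hs : s ∈ Ioc 0 T)
    (hinit : HasGaussianMorreyBound a 0 δ M (w 0))
    (hb : ∀ u ∈ Ioo 0 s, ∀ y, ‖b u y‖ ≤ ε / √u)
    (hbound : ∀ u ∈ Ioo 0 s, HasGaussianMorreyBound a (4 * σ * u) δ (3 * M) (w u)) :
    HasGaussianMorreyBound a (4 * σ * s) δ (2 * M) (w s) := by
  intro τ hτ x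
  have hτ₀ : 0 < τ := hδ.trans_le hτ
  have hs₀ : 0 < s := hs.1
  have hbase : 0 < 4 * σ * s + τ := by positivity
  have hpow : 0 < (4 * σ * s + τ) ^ a := Real.rpow_pos_of_pos hbase a
  have havg (u : ℝ) (hu : u ∈ Ioo 0 s) :
      gaussianAverage (2 * (4 * σ * (s - u) + τ)) (w u) x ≤ 3 * M / (4 * σ * s + τ) ^ a := by
    have hlag : 0 ≤ σ * (s - u) := mul_nonneg hσ.le (sub_nonneg.2 hu.2.le)
    rw [le_div_iff₀ hpow, mul_comm]
    refine le_trans (mul_le_mul_of_nonneg_right (Real.rpow_le_rpow hbase.le ?_ ha)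
      (gaussianAverage_nonneg ?_ (H.nonneg u ⟨hu.1.le, hu.2.le.trans hs.2⟩) x))
      (hbound u hu (2 * (4 * σ * (s - u) + τ)) ?_ x)
    all_goals linarith
  have hinit' : (4 * σ * s + τ) ^ a * gaussianAverage (4 * σ * s + τ) (w 0) x ≤ M := by
    have hscale : δ ≤ 4 * σ * s + τ := by
      have : 0 ≤ 4 * σ * s := by positivity
      linarith
    simpa only [zero_add] using hinit _ hscale x
  calc (4 * σ * s + τ) ^ a * gaussianAverage τ (w s) x
      ≤ (4 * σ * s + τ) ^ a * (gaussianAverage (4 * σ * s + τ) (w 0) x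
        + duhamelConst d σ * ε * (3 * M / (4 * σ * s + τ) ^ a)) :=
        mul_le_mul_of_nonneg_left (H.gaussianAverage_le_add_of_norm_drift_le_div_sqrt hσ hs₀ hs.2
          hτ₀ (by positivity) hε x hb havg) hpow.le
    _ = (4 * σ * s + τ) ^ a * gaussianAverage (4 * σ * s + τ) (w 0) x
        + duhamelConst d σ * ε * (3 * M) := by field_simp
    _ ≤ M + 1 / 3 * (3 * M) := by gcongr
    _ = 2 * M := by ring

-- At scales `τ ≥ δ` the mass of `w` bounds its averages, so only the size of `b` enters.
lemma exists_forall_hasGaussianMorreyBound_add (H : IsDriftDiffusionSolution σ T b w) (hσ : 0 ≤ σ)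
    {a δ e : ℝ} (ha : 0 ≤ a) (had : a ≤ ((d : ℝ) + 1) / 2) (hδ : 0 < δ) (he : 0 < e) :
    ∃ h : ℝ, 0 < h ∧ ∀ t s Z, 0 ≤ t → t ≤ s → s ≤ T → s ≤ t + h →
      HasGaussianMorreyBound a (4 * σ * t) δ Z (w t) →
        HasGaussianMorreyBound a (4 * σ * s) δ (Z + e) (w s) := by
  obtain ⟨K, hK⟩ := H.exists_norm_drift_le
  set L := (4 * σ * T / δ + 1) ^ a * δ ^ (a - ((d : ℝ) + 1) / 2)
  set A := gaussianGradConst d * K * L with hA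
  refine ⟨e / (|A| + 1), by positivity, fun t s Z ht hts hsT hsh hbound τ hτ x => ?_⟩
  have hτ₀ : 0 < τ := hδ.trans_le hτ
  have hs : 0 ≤ s := ht.trans hts
  have hK₀ : 0 ≤ K := (norm_nonneg _).trans (hK s ⟨hs, hsT⟩ 0)
  have hc := gaussianGradConst_pos d
  have hlag (u : ℝ) (hu : u ≤ s) : 0 ≤ 4 * σ * (s - u) :=
    mul_nonneg (by positivity) (sub_nonneg.2 hu)
  have hprev := hbound (4 * σ * (s - t) + τ) (by linarith [hlag t hts]) x
  rw [show 4 * σ * t + (4 * σ * (s - t) + τ) = 4 * σ * s + τ by ring] at hprev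
  have hweight : (4 * σ * s + τ) ^ a * (τ ^ (-(1 : ℝ) / 2) * τ ^ (-(d : ℝ) / 2)) ≤ L := by
    rw [← Real.rpow_add hτ₀, show -(1 : ℝ) / 2 + -(d : ℝ) / 2 = -(((d : ℝ) + 1) / 2) by ring]
    exact rpow_mul_rpow_neg_le ha had (by positivity) (by gcongr) hδ hτ
  have hstep : A * (s - t) ≤ e := by
    have hst : s - t ≤ e / (|A| + 1) := by linarith
    rw [le_div_iff₀ (by positivity)] at hst
    nlinarith [le_abs_self A, sub_nonneg.2 hts]
  have havg (u : ℝ) (hu : u ∈ Ioo t s) :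
      gaussianAverage (2 * (4 * σ * (s - u) + τ)) (w u) x ≤ τ ^ (-(d : ℝ) / 2) :=
    H.gaussianAverage_le_rpow ⟨ht.trans hu.1.le, hu.2.le.trans hsT⟩ hτ₀
      (by linarith [hlag u hu.2.le]) x
  calc (4 * σ * s + τ) ^ a * gaussianAverage τ (w s) x
      ≤ (4 * σ * s + τ) ^ a * (gaussianAverage (4 * σ * (s - t) + τ) (w t) x
        + gaussianGradConst d * τ ^ (-(1 : ℝ) / 2) * K * τ ^ (-(d : ℝ) / 2) * (s - t)) := by
        gcongr
        exact H.gaussianAverage_le_add_of_norm_drift_le hσ ht hts hsT hτ₀ (by positivity) x hK havg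
    _ = (4 * σ * s + τ) ^ a * gaussianAverage (4 * σ * (s - t) + τ) (w t) x
        + gaussianGradConst d * K * ((4 * σ * s + τ) ^ a
          * (τ ^ (-(1 : ℝ) / 2) * τ ^ (-(d : ℝ) / 2))) * (s - t) := by ring
    _ ≤ Z + gaussianGradConst d * K * L * (s - t) := by
        have := sub_nonneg.2 hts
        gcongr
    _ ≤ Z + e := by linarith

lemma norm_drift_le_div_sqrt (H : IsDriftDiffusionSolution σ T b w) (hσ : 0 < σ) (hT : 0 < T)
    {a c M : ℝ} (ha : 0 ≤ a) (had : a ≤ ((d : ℝ) + 1) / 2) (hc : 0 < c) (hM : 0 < M)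
    (hsmall : duhamelConst d σ * (2 * c * M / √σ) ≤ 1 / 3) (hctl : IsControlledDrift σ T a c b w)
    (hinit : ∀ δ > 0, HasGaussianMorreyBound a 0 δ M (w 0)) :
    ∀ s ∈ Ioc 0 T, ∀ x, ‖b s x‖ ≤ 2 * c * M / √σ / √s := by
  obtain ⟨δ, hδ, hdrift⟩ := hctl.exists_norm_le_div_sqrt hσ hT hc hM
  obtain ⟨h, hh, hextend⟩ := H.exists_forall_hasGaussianMorreyBound_add hσ.le ha had hδ hM
  have hstart : HasGaussianMorreyBound a (4 * σ * 0) δ (2 * M) (w 0) := by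
    rw [mul_zero]
    exact fun τ hτ x => (hinit δ hδ τ hτ x).trans (by linarith)
  have hbound := forall_mem_Icc_of_improve_of_extend (T := T)
    (P := fun s => HasGaussianMorreyBound a (4 * σ * s) δ (2 * M) (w s))
    (Q := fun s => HasGaussianMorreyBound a (4 * σ * s) δ (3 * M) (w s)) hh hstart
    (fun t ht hweak => H.hasGaussianMorreyBound_improve hσ ha hδ hM.le (by positivity) hsmall ht
      (hinit δ hδ) (fun s hs => hdrift s ⟨hs.1, hs.2.le.trans ht.2⟩ (hweak s hs)) hweak)
    (fun t s ht hts hsT hsh hstrong => by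
      rw [show 3 * M = 2 * M + M by ring]
      exact hextend t s _ ht hts hsT hsh hstrong)
  exact fun s hs => hdrift s hs fun τ hτ x =>
    (hbound s (Ioc_subset_Icc_self hs) τ hτ x).trans (by linarith)

lemma le_two_mul_of_norm_drift_le_div_sqrt (H : IsDriftDiffusionSolution σ T b w) (hσ : 0 < σ)
    {M ε : ℝ} (hε : 0 ≤ ε) (hsmall : duhamelConst d σ * ε ≤ 1 / 2)
    (hb : ∀ s ∈ Ioc 0 T, ∀ x, ‖b s x‖ ≤ ε / √s) (hM : ∀ x, w 0 x ≤ M) :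
    ∀ t ∈ Icc 0 T, ∀ x, w t x ≤ 2 * M := by
  intro t ht x
  have h0T : (0 : ℝ) ∈ Icc 0 T := ⟨le_rfl, ht.1.trans ht.2⟩
  refine le_of_forall_gaussianAverage_le (H.integrable t ht) (H.contDiff ht).continuous x
    fun τ₀ hτ₀ => ?_
  refine forall_le_two_mul_of_improve (S := Icc 0 T ×ˢ Ici τ₀ ×ˢ (univ : Set ℝ^d))
    (f := fun p => gaussianAverage p.2.1 (w p.1) p.2.2) ⟨τ₀ ^ (-(d : ℝ) / 2), ?_⟩ ?_ (t, τ₀, x)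
    ⟨ht, self_mem_Ici, mem_univ x⟩
  · rintro _ ⟨⟨s, τ, y⟩, ⟨hs, hτ, -⟩, rfl⟩
    exact H.gaussianAverage_le_rpow hs hτ₀ hτ y
  · rintro m hm ⟨s, τ, y⟩ ⟨hs, hτ, hy⟩
    have hτ' : 0 < τ := hτ₀.trans_le hτ
    have hm₀ : 0 ≤ m := (gaussianAverage_nonneg hτ' (H.nonneg s hs) y).trans (hm _ ⟨hs, hτ, hy⟩)
    rcases hs.1.eq_or_lt with rfl | hs₀
    · exact (gaussianAverage_le_of_le hτ' (H.integrable 0 h0T) hM y).trans (by linarith)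
    have hduhamel := H.gaussianAverage_le_add_of_norm_drift_le_div_sqrt hσ hs₀ hs.2 hτ' hm₀ hε y
      (fun u hu => hb u ⟨hu.1, hu.2.le.trans hs.2⟩) fun u hu =>
        hm (u, 2 * (4 * σ * (s - u) + τ), y) ⟨⟨hu.1.le, hu.2.le.trans hs.2⟩, by
          have hlag : 0 ≤ σ * (s - u) := mul_nonneg hσ.le (sub_nonneg.2 hu.2.le)
          rw [mem_Ici] at hτ ⊢
          linarith, mem_univ y⟩
    have hinit := gaussianAverage_le_of_le (τ := 4 * σ * s + τ) (by positivity)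
      (H.integrable 0 h0T) hM y
    linarith [mul_le_mul_of_nonneg_right hsmall hm₀]

end IsDriftDiffusionSolution

lemma integrableOn_ball_norm_rpow_neg {μ : ℝ} (hμ₀ : 0 ≤ μ) (hμ : μ < d) (r : ℝ) :
    IntegrableOn (fun y : ℝ^d => ‖y‖ ^ (-μ)) (Metric.ball 0 r) := by
  have hd : 0 < d := by exact_mod_cast hμ₀.trans_lt hμ
  have : Nonempty (Fin d) := ⟨⟨0, hd⟩⟩
  rw [integrableOn_fun_norm_addHaar (volume : Measure ℝ^d) (f := fun t : ℝ => t ^ (-μ))]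
  have hradial : IntegrableOn (fun t : ℝ => t ^ ((d : ℝ) - 1 - μ)) (Ioo 0 r) :=
    (intervalIntegral.intervalIntegrable_rpow' (by linarith)).1.mono_set Ioo_subset_Ioc_self
  refine hradial.congr_fun (fun t ht => ?_) measurableSet_Ioo
  simp only [finrank_euclideanSpace_fin, smul_eq_mul]
  rw [← Real.rpow_natCast, ← Real.rpow_add ht.1, Nat.cast_sub hd, Nat.cast_one]
  ring_nf

lemma locallyIntegrable_norm_rpow_neg {μ : ℝ} (hμ₀ : 0 ≤ μ) (hμ : μ < d) :
    LocallyIntegrable (fun y : ℝ^d => ‖y‖ ^ (-μ)) := fun x =>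
  ⟨Metric.ball 0 (‖x‖ + 1), Metric.isOpen_ball.mem_nhds (by simp),
    integrableOn_ball_norm_rpow_neg hμ₀ hμ _⟩

/-- The convolution `|·|^{-μ} * F` of the Riesz kernel with a vector-valued function. -/
def rieszConvolution {E : Type*} [NormedAddCommGroup E] [NormedSpace ℝ E] (μ : ℝ) (F : ℝ^d → E)
    (z : ℝ^d) : E :=
  ∫ y, ‖y‖ ^ (-μ) • F (z - y)

section RieszConvolution

variable {E : Type*} [NormedAddCommGroup E] [NormedSpace ℝ E] {μ : ℝ} {F : ℝ^d → E}

lemma rieszConvolution_eq_integral_norm_sub (μ : ℝ) (F : ℝ^d → E) (z : ℝ^d) :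
    rieszConvolution μ F z = ∫ y, ‖z - y‖ ^ (-μ) • F y := by
  rw [rieszConvolution, ← integral_sub_left_eq_self _ volume z]
  simp only [sub_sub_cancel]

lemma integrable_norm_rpow_smul (hμ₀ : 0 ≤ μ) (hμ : μ < d) (hF : Continuous F)
    (hF' : HasCompactSupport F) (z : ℝ^d) : Integrable (fun y => ‖y‖ ^ (-μ) • F (z - y)) :=
  (locallyIntegrable_norm_rpow_neg hμ₀ hμ).integrable_smul_right_of_hasCompactSupport
    (by fun_prop) (hF'.comp_homeomorph (Homeomorph.subLeft z))

lemma integrable_norm_sub_rpow_smul (hμ₀ : 0 ≤ μ) (hμ : μ < d) (hF : Continuous F)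
    (hF' : HasCompactSupport F) (z : ℝ^d) : Integrable (fun y => ‖z - y‖ ^ (-μ) • F y) := by
  simpa using (integrable_norm_rpow_smul hμ₀ hμ hF hF' z).comp_sub_left z

lemma exists_norm_rieszConvolution_le (hμ₀ : 0 ≤ μ) (hμ : μ < d) (hF : Continuous F)
    (hF' : HasCompactSupport F) : ∃ C, ∀ z, ‖rieszConvolution μ F z‖ ≤ C := by
  obtain ⟨A, hA⟩ := hF'.exists_bound_of_continuous hF
  have hFi : Integrable F := hF.integrable_of_hasCompactSupport hF'
  set near : ℝ^d → ℝ := (Metric.ball 0 1).indicator (fun y => ‖y‖ ^ (-μ) * A) with hnear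
  have hnear_int : Integrable near := by
    rw [hnear, integrable_indicator_iff measurableSet_ball]
    exact (integrableOn_ball_norm_rpow_neg hμ₀ hμ 1).mul_const A
  refine ⟨(∫ y, near y) + ∫ y, ‖F y‖, fun z => ?_⟩
  have hfar_int : Integrable (fun y => ‖F (z - y)‖) := (hFi.comp_sub_left z).norm
  rw [← integral_sub_left_eq_self (fun y => ‖F y‖) volume z, ← integral_add hnear_int hfar_int]
  refine norm_integral_le_of_norm_le (hnear_int.add hfar_int) (Eventually.of_forall fun y => ?_)
  rw [norm_smul, Real.norm_of_nonneg (by positivity)]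
  by_cases hy : y ∈ Metric.ball (0 : ℝ^d) 1
  · rw [hnear, indicator_of_mem hy]
    exact le_add_of_le_of_nonneg (by gcongr; exact hA _) (norm_nonneg _)
  · rw [hnear, indicator_of_notMem hy, zero_add]
    have hy' : 1 ≤ ‖y‖ := by simpa using hy
    exact mul_le_of_le_one_left (norm_nonneg _)
      (Real.rpow_le_one_of_one_le_of_nonpos hy' (by linarith))

lemma contDiff_rieszConvolution (hμ₀ : 0 ≤ μ) (hμ : μ < d) {n : ℕ∞} (hF : ContDiff ℝ n F)
    (hF' : HasCompactSupport F) : ContDiff ℝ n (rieszConvolution μ F) :=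
  hF'.contDiff_convolution_right (ContinuousLinearMap.lsmul ℝ ℝ)
    (locallyIntegrable_norm_rpow_neg hμ₀ hμ) hF

lemma fderiv_rieszConvolution (hμ₀ : 0 ≤ μ) (hμ : μ < d) (hF : ContDiff ℝ 1 F)
    (hF' : HasCompactSupport F) (z : ℝ^d) :
    fderiv ℝ (rieszConvolution μ F) z = rieszConvolution μ (fderiv ℝ F) z :=
  (hF'.hasFDerivAt_convolution_right (ContinuousLinearMap.lsmul ℝ ℝ)
    (locallyIntegrable_norm_rpow_neg hμ₀ hμ) hF z).fderiv

end RieszConvolution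

section GradientRieszConvolution

variable {μ : ℝ} {f : ℝ^d → ℝ}

lemma gradient_rieszConvolution (hμ₀ : 0 ≤ μ) (hμ : μ < d) (hf : ContDiff ℝ 1 f)
    (hf' : HasCompactSupport f) : ∇ (rieszConvolution μ f) = rieszConvolution μ (∇ f) := by
  ext1 z
  refine ext_inner_right ℝ fun v => ?_
  rw [inner_gradient_left, fderiv_rieszConvolution hμ₀ hμ hf hf', real_inner_comm,
    rieszConvolution, rieszConvolution,
    ← integral_inner (integrable_norm_rpow_smul hμ₀ hμ (continuous_gradient hf)
      (hasCompactSupport_gradient hf') z),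
    ContinuousLinearMap.integral_apply (integrable_norm_rpow_smul hμ₀ hμ
      (hf.continuous_fderiv one_ne_zero) (hf'.fderiv ℝ) z)]
  refine integral_congr_ae (Eventually.of_forall fun y => ?_)
  simp only [smul_apply, smul_eq_mul, real_inner_smul_right,
    real_inner_comm (∇ f _), inner_gradient_left]

lemma contDiff_gradient {n : ℕ∞} (hf : ContDiff ℝ (n + 1) f) : ContDiff ℝ n (∇ f) :=
  (InnerProductSpace.toDual ℝ ℝ^d).symm.contDiff.comp (hf.fderiv_right le_rfl)

lemma contDiff_gradient_rieszConvolution (hμ₀ : 0 ≤ μ) (hμ : μ < d) (hf : ContDiff ℝ 2 f)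
    (hf' : HasCompactSupport f) : ContDiff ℝ 1 (∇ (rieszConvolution μ f)) := by
  rw [gradient_rieszConvolution hμ₀ hμ (hf.of_le one_le_two) hf']
  exact contDiff_rieszConvolution hμ₀ hμ (n := 1) (contDiff_gradient (by exact_mod_cast hf))
    (hasCompactSupport_gradient hf')

lemma exists_norm_gradient_rieszConvolution_le (hμ₀ : 0 ≤ μ) (hμ : μ < d) (hf : ContDiff ℝ 1 f)
    (hf' : HasCompactSupport f) : ∃ C, ∀ z, ‖∇ (rieszConvolution μ f) z‖ ≤ C := by
  rw [gradient_rieszConvolution hμ₀ hμ hf hf']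
  exact exists_norm_rieszConvolution_le hμ₀ hμ (continuous_gradient hf)
    (hasCompactSupport_gradient hf')

lemma exists_norm_fderiv_gradient_rieszConvolution_le (hμ₀ : 0 ≤ μ) (hμ : μ < d)
    (hf : ContDiff ℝ 2 f) (hf' : HasCompactSupport f) :
    ∃ C, ∀ z, ‖fderiv ℝ (∇ (rieszConvolution μ f)) z‖ ≤ C := by
  have hgrad : ContDiff ℝ 1 (∇ f) := contDiff_gradient (n := 1) (by exact_mod_cast hf)
  have hgrad' : HasCompactSupport (∇ f) := hasCompactSupport_gradient hf'
  simp only [gradient_rieszConvolution hμ₀ hμ (hf.of_le one_le_two) hf',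
    fderiv_rieszConvolution hμ₀ hμ hgrad hgrad']
  exact exists_norm_rieszConvolution_le hμ₀ hμ (hgrad.continuous_fderiv one_ne_zero)
    (hgrad'.fderiv ℝ)

lemma rpow_neg_sub_rpow_neg_le {a b : ℝ} (hμ : 0 ≤ μ) (ha : 0 < a) (hb : 0 < b) :
    b ^ (-μ) - a ^ (-μ) ≤ μ * |a - b| * b ^ (-(μ + 1)) := by
  have hratio : 0 < a / b := by positivity
  have hbernoulli : 1 - μ * (a / b - 1) ≤ (a / b) ^ (-μ) := by
    rw [Real.rpow_def_of_pos hratio]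
    have hexp := Real.add_one_le_exp (Real.log (a / b) * -μ)
    have hlog := mul_le_mul_of_nonneg_left (Real.log_le_sub_one_of_pos hratio) hμ
    linarith
  have ha' : a ^ (-μ) = b ^ (-μ) * (a / b) ^ (-μ) := by
    rw [← Real.mul_rpow hb.le hratio.le, mul_div_cancel₀ _ hb.ne']
  have hb' : b ^ (-(μ + 1)) = b ^ (-μ) / b := by
    rw [neg_add, ← sub_eq_add_neg, Real.rpow_sub_one hb.ne']
  rw [ha', hb']
  calc b ^ (-μ) - b ^ (-μ) * (a / b) ^ (-μ)
      ≤ b ^ (-μ) - b ^ (-μ) * (1 - μ * (a / b - 1)) := by gcongr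
    _ = μ * (a - b) * (b ^ (-μ) / b) := by field_simp; ring
    _ ≤ μ * |a - b| * (b ^ (-μ) / b) := by gcongr; exact le_abs_self _

lemma abs_rpow_neg_sub_rpow_neg_le {a b : ℝ} (hμ : 0 ≤ μ) (ha : 0 < a) (hb : 0 < b) :
    |a ^ (-μ) - b ^ (-μ)| ≤ μ * |a - b| * (a ^ (-(μ + 1)) + b ^ (-(μ + 1))) := by
  have hba := rpow_neg_sub_rpow_neg_le hμ ha hb
  have hab := rpow_neg_sub_rpow_neg_le hμ hb ha
  rw [abs_sub_comm b a] at hab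
  have hna : 0 ≤ μ * |a - b| * a ^ (-(μ + 1)) := by positivity
  have hnb : 0 ≤ μ * |a - b| * b ^ (-(μ + 1)) := by positivity
  rw [abs_le]
  constructor <;> linarith

lemma abs_norm_sub_rpow_neg_sub_le (hμ : 0 ≤ μ) {x y z : ℝ^d} (hx : y ≠ x) (hz : y ≠ z) :
    |‖x - y‖ ^ (-μ) - ‖z - y‖ ^ (-μ)| ≤
      μ * ‖x - z‖ * (‖x - y‖ ^ (-(μ + 1)) + ‖z - y‖ ^ (-(μ + 1))) := by
  refine (abs_rpow_neg_sub_rpow_neg_le hμ (norm_pos_iff.2 (sub_ne_zero.2 hx.symm))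
    (norm_pos_iff.2 (sub_ne_zero.2 hz.symm))).trans ?_
  gcongr
  simpa using abs_norm_sub_norm_le (x - y) (z - y)

lemma abs_rieszConvolution_sub_le (hμ₀ : 0 ≤ μ) (hμ : μ + 1 < d) (hf : Continuous f)
    (hf' : HasCompactSupport f) (hf₀ : ∀ x, 0 ≤ f x) (x z : ℝ^d) :
    |rieszConvolution μ f x - rieszConvolution μ f z| ≤
      μ * (rieszConvolution (μ + 1) f x + rieszConvolution (μ + 1) f z) * ‖x - z‖ := by
  have hd : 0 < d := by exact_mod_cast (by positivity : (0 : ℝ) ≤ μ + 1).trans_lt hμ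
  have : Nonempty (Fin d) := ⟨⟨0, hd⟩⟩
  have hint (v : ℝ^d) := integrable_norm_sub_rpow_smul hμ₀ (by linarith) hf hf' v
  have hint' (v : ℝ^d) := integrable_norm_sub_rpow_smul (by linarith) hμ hf hf' v
  have hpointwise : ∀ᵐ y : ℝ^d, ‖‖x - y‖ ^ (-μ) • f y - ‖z - y‖ ^ (-μ) • f y‖ ≤
      μ * ‖x - z‖ * (‖x - y‖ ^ (-(μ + 1)) • f y + ‖z - y‖ ^ (-(μ + 1)) • f y) := by
    filter_upwards [Measure.ae_ne volume x, Measure.ae_ne volume z] with y hx hz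
    rw [← sub_smul, norm_smul, Real.norm_eq_abs, Real.norm_of_nonneg (hf₀ y)]
    exact (mul_le_mul_of_nonneg_right (abs_norm_sub_rpow_neg_sub_le hμ₀ hx hz) (hf₀ y)).trans_eq
      (by simp only [smul_eq_mul]; ring)
  simp only [rieszConvolution_eq_integral_norm_sub]
  rw [← integral_sub (hint x) (hint z), ← integral_add (hint' x) (hint' z), ← Real.norm_eq_abs]
  refine (norm_integral_le_of_norm_le (((hint' x).add (hint' z)).const_mul _)
    hpointwise).trans_eq ?_
  simp only [Pi.add_apply]
  rw [integral_const_mul]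
  ring

lemma norm_gradient_rieszConvolution_le (hμ₀ : 0 ≤ μ) (hμ : μ + 1 < d) (hf : Continuous f)
    (hf' : HasCompactSupport f) (hf₀ : ∀ x, 0 ≤ f x) (z : ℝ^d) :
    ‖∇ (rieszConvolution μ f) z‖ ≤ 2 * μ * rieszConvolution (μ + 1) f z := by
  set U := rieszConvolution (μ + 1) f
  have hU : Continuous U :=
    (contDiff_rieszConvolution (n := 0) (by linarith) hμ (contDiff_zero.2 hf) hf').continuous
  have hU₀ : 0 ≤ U z := integral_nonneg fun y => smul_nonneg (by positivity) (hf₀ _)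
  rw [norm_gradient]
  refine le_of_forall_pos_le_add fun ε hε => norm_fderiv_le_of_lip' ℝ (by positivity) ?_
  have hlim : Tendsto (fun x => μ * (U x + U z)) (𝓝 z) (𝓝 (μ * (U z + U z))) :=
    ((hU.tendsto z).add_const _).const_mul μ
  filter_upwards [hlim.eventually (gt_mem_nhds
    (show μ * (U z + U z) < 2 * μ * U z + ε by linarith))] with x hx
  exact (abs_rieszConvolution_sub_le hμ₀ hμ hf hf' hf₀ x z).trans
    (mul_le_mul_of_nonneg_right hx.le (norm_nonneg _))

end GradientRieszConvolution

lemma contDiff_one_integral_smul_comp_sub {E : Type*} [NormedAddCommGroup E] [NormedSpace ℝ E]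
    {g : ℝ^d → ℝ} {K : ℝ^d → E} {A B : ℝ} (hg : Integrable g)
    (hK : ContDiff ℝ 1 K) (hA : ∀ z, ‖K z‖ ≤ A) (hB : ∀ z, ‖fderiv ℝ K z‖ ≤ B) :
    ContDiff ℝ 1 (fun z => ∫ y, g y • K (z - y)) := by
  have hKc := hK.continuous
  have hK'c : Continuous (fderiv ℝ K) := hK.continuous_fderiv one_ne_zero
  have hgm := hg.aestronglyMeasurable
  have hmeas (z : ℝ^d) : AEStronglyMeasurable (fun y => g y • K (z - y)) :=
    hgm.smul (hKc.comp (continuous_const.sub continuous_id)).aestronglyMeasurable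
  have hmeas' (z : ℝ^d) : AEStronglyMeasurable (fun y => g y • fderiv ℝ K (z - y)) :=
    hgm.smul (hK'c.comp (continuous_const.sub continuous_id)).aestronglyMeasurable
  have hbound (z y : ℝ^d) : ‖g y • K (z - y)‖ ≤ ‖g y‖ * A := by
    rw [norm_smul]; gcongr; exact hA _
  have hbound' (z y : ℝ^d) : ‖g y • fderiv ℝ K (z - y)‖ ≤ ‖g y‖ * B := by
    rw [norm_smul]; gcongr; exact hB _
  refine contDiff_one_iff_hasFDerivAt.2 ⟨fun z => ∫ y, g y • fderiv ℝ K (z - y), ?_, fun z => ?_⟩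
  · exact continuous_of_dominated hmeas' (fun z => Eventually.of_forall (hbound' z))
      (hg.norm.mul_const B) (Eventually.of_forall fun y => by fun_prop)
  · refine hasFDerivAt_integral_of_dominated_of_fderiv_le (F := fun z y => g y • K (z - y))
      univ_mem (Eventually.of_forall hmeas)
      ((hg.norm.mul_const A).mono' (hmeas z) (Eventually.of_forall (hbound z))) (hmeas' z)
      (Eventually.of_forall fun y v _ => hbound' v y) (hg.norm.mul_const B)
      (Eventually.of_forall fun y v _ => ?_)
    have hchain := (hK.differentiable one_ne_zero (v - y)).hasFDerivAt.comp v
      ((hasFDerivAt_id v).sub_const y)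
    rw [ContinuousLinearMap.comp_id] at hchain
    exact hchain.const_smul (g y)

lemma lintegral_Ioi_rpow_mul_exp_neg_mul_sq {m r : ℝ} (hm : 0 < m) (hr : 0 < r) :
    ∫⁻ u in Ioi (0 : ℝ), ENNReal.ofReal (u ^ (m / 2 - 1) * Real.exp (-(u * r ^ 2))) =
      ENNReal.ofReal (Real.Gamma (m / 2) * r ^ (-m)) := by
  have hGamma : 0 < Real.Gamma (m / 2) := Real.Gamma_pos_of_pos (by linarith)
  have hscale : (1 / r ^ 2) ^ (m / 2) = r ^ (-m) := by
    rw [one_div, Real.inv_rpow (by positivity), ← Real.rpow_natCast, ← Real.rpow_mul hr.le,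
      Real.rpow_neg hr.le, Nat.cast_ofNat, mul_div_cancel₀ _ two_ne_zero]
  have hvalue := Real.integral_rpow_mul_exp_neg_mul_Ioi (a := m / 2) (r := r ^ 2) (by linarith)
    (by positivity)
  rw [hscale, mul_comm] at hvalue
  simp only [mul_comm _ (r ^ 2)]
  rw [← hvalue, ofReal_integral_eq_lintegral_ofReal]
  · refine not_imp_comm.1 integral_undef ?_
    rw [hvalue]
    positivity
  · filter_upwards [ae_restrict_mem measurableSet_Ioi] with u hu
    exact mul_nonneg (Real.rpow_nonneg (le_of_lt hu) _) (Real.exp_pos _).le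

lemma rpow_mul_exp_neg_mul_norm_sq {u : ℝ} (hu : 0 < u) (m : ℝ) (z : ℝ^d) :
    u ^ (m / 2 - 1) * Real.exp (-(u * ‖z‖ ^ 2)) =
      Real.pi ^ ((d : ℝ) / 2) * (u ^ ((m - d) / 2 - 1) * gaussianKernel u⁻¹ z) := by
  have hpi : Real.pi ^ ((d : ℝ) / 2) * Real.pi ^ (-(d : ℝ) / 2) = 1 := by
    rw [← Real.rpow_add Real.pi_pos, neg_div, add_neg_cancel, Real.rpow_zero]
  have hu' : u ^ (m / 2 - 1) = u ^ ((m - d) / 2 - 1) * u⁻¹ ^ (-(d : ℝ) / 2) := by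
    rw [Real.inv_rpow hu.le, ← Real.rpow_neg hu.le, ← Real.rpow_add hu]
    ring_nf
  rw [gaussianKernel, inv_inv, Real.mul_rpow Real.pi_pos.le (by positivity), hu']
  linear_combination (-1) * (u ^ ((m - d) / 2 - 1) * u⁻¹ ^ (-(d : ℝ) / 2) *
    Real.exp (-(u * ‖z‖ ^ 2))) * hpi

lemma ofReal_norm_rpow_neg_le_lintegral_gaussianKernel {m : ℝ} (hm : 0 < m) (z : ℝ^d) :
    ENNReal.ofReal (‖z‖ ^ (-m)) ≤ ENNReal.ofReal (Real.pi ^ ((d : ℝ) / 2) / Real.Gamma (m / 2)) *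
      ∫⁻ u in Ioi (0 : ℝ), ENNReal.ofReal (u ^ ((m - d) / 2 - 1)) *
        ENNReal.ofReal (gaussianKernel u⁻¹ z) := by
  rcases (norm_nonneg z).eq_or_lt with hz | hz
  · rw [← hz, Real.zero_rpow (by linarith)]
    simp
  have hGamma : 0 < Real.Gamma (m / 2) := Real.Gamma_pos_of_pos (by linarith)
  have hpi : 0 < Real.pi ^ ((d : ℝ) / 2) := Real.rpow_pos_of_pos Real.pi_pos _
  refine le_of_eq ?_
  calc ENNReal.ofReal (‖z‖ ^ (-m))
      = ENNReal.ofReal (Real.Gamma (m / 2))⁻¹ *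
          ENNReal.ofReal (Real.Gamma (m / 2) * ‖z‖ ^ (-m)) := by
        rw [← ENNReal.ofReal_mul (by positivity), inv_mul_cancel_left₀ hGamma.ne']
    _ = ENNReal.ofReal (Real.Gamma (m / 2))⁻¹ * ∫⁻ u in Ioi (0 : ℝ),
          ENNReal.ofReal (Real.pi ^ ((d : ℝ) / 2)) *
            (ENNReal.ofReal (u ^ ((m - d) / 2 - 1)) * ENNReal.ofReal (gaussianKernel u⁻¹ z)) := by
        rw [← lintegral_Ioi_rpow_mul_exp_neg_mul_sq hm hz]
        congr 1
        refine setLIntegral_congr_fun measurableSet_Ioi fun u hu => ?_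
        rw [rpow_mul_exp_neg_mul_norm_sq hu, ENNReal.ofReal_mul hpi.le,
          ENNReal.ofReal_mul (Real.rpow_nonneg (le_of_lt hu) _)]
    _ = _ := by
        rw [lintegral_const_mul' _ _ ENNReal.ofReal_ne_top, ← mul_assoc,
          ← ENNReal.ofReal_mul (by positivity), inv_mul_eq_div]

lemma lconvolution_norm_rpow_neg_le {m : ℝ} (hm : 0 < m) {h : ℝ^d → ENNReal} (hh : AEMeasurable h)
    (x : ℝ^d) :
    (h ⋆ₗ fun z => ENNReal.ofReal (‖z‖ ^ (-m))) x ≤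
      ENNReal.ofReal (Real.pi ^ ((d : ℝ) / 2) / Real.Gamma (m / 2)) *
        ∫⁻ u in Ioi (0 : ℝ), ENNReal.ofReal (u ^ ((m - d) / 2 - 1)) *
          (h ⋆ₗ fun z => ENNReal.ofReal (gaussianKernel u⁻¹ z)) x := by
  have hmeas : Measurable fun p : ℝ^d × ℝ => ENNReal.ofReal (p.2 ^ ((m - d) / 2 - 1)) *
      ENNReal.ofReal (gaussianKernel p.2⁻¹ (-p.1 + x)) := by
    unfold gaussianKernel
    fun_prop
  have hmeas_slice (y : ℝ^d) : Measurable fun u : ℝ => ENNReal.ofReal (u ^ ((m - d) / 2 - 1)) *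
      ENNReal.ofReal (gaussianKernel u⁻¹ (-y + x)) := hmeas.comp measurable_prodMk_left
  simp only [lconvolution_def]
  calc ∫⁻ y, h y * ENNReal.ofReal (‖-y + x‖ ^ (-m))
      ≤ ∫⁻ y, ENNReal.ofReal (Real.pi ^ ((d : ℝ) / 2) / Real.Gamma (m / 2)) *
          ∫⁻ u in Ioi (0 : ℝ), h y * (ENNReal.ofReal (u ^ ((m - d) / 2 - 1)) *
            ENNReal.ofReal (gaussianKernel u⁻¹ (-y + x))) := by
        refine lintegral_mono fun y => ?_
        rw [lintegral_const_mul _ (hmeas_slice y), mul_left_comm]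
        gcongr
        exact ofReal_norm_rpow_neg_le_lintegral_gaussianKernel hm _
    _ = ENNReal.ofReal (Real.pi ^ ((d : ℝ) / 2) / Real.Gamma (m / 2)) *
          ∫⁻ u in Ioi (0 : ℝ), ∫⁻ y, h y * (ENNReal.ofReal (u ^ ((m - d) / 2 - 1)) *
            ENNReal.ofReal (gaussianKernel u⁻¹ (-y + x))) := by
        rw [lintegral_const_mul' _ _ ENNReal.ofReal_ne_top, lintegral_lintegral_swap]
        exact hh.comp_fst.mul hmeas.aemeasurable
    _ = _ := by
        congr 1
        refine lintegral_congr fun u => ?_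
        rw [← lintegral_const_mul' _ _ ENNReal.ofReal_ne_top]
        exact lintegral_congr fun y => mul_left_comm _ _ _

lemma lconvolution_le_lintegral_mul {h k : ℝ^d → ENNReal} {D : ENNReal} (hD : D ≠ ⊤)
    (hk : ∀ z, k z ≤ D) (x : ℝ^d) : (h ⋆ₗ k) x ≤ (∫⁻ y, h y) * D := by
  rw [lconvolution_def, ← lintegral_mul_const' _ _ hD]
  exact lintegral_mono fun y => mul_le_mul_right (hk _) _

lemma lconvolution_gaussianKernel {τ : ℝ} (hτ : 0 < τ) {g : ℝ^d → ℝ} (hg : Integrable g)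
    (hg₀ : ∀ x, 0 ≤ g x) (x : ℝ^d) :
    ((fun y => ENNReal.ofReal (g y)) ⋆ₗ fun z => ENNReal.ofReal (gaussianKernel τ z)) x =
      ENNReal.ofReal (gaussianAverage τ g x) := by
  rw [lconvolution_def, gaussianAverage, ofReal_integral_eq_lintegral_ofReal
    (integrable_gaussianKernel_sub_mul hτ hg x)
    (Eventually.of_forall fun y => mul_nonneg (gaussianKernel_pos hτ _).le (hg₀ y))]
  refine lintegral_congr fun y => ?_
  rw [neg_add_eq_sub, mul_comm, ENNReal.ofReal_mul (gaussianKernel_pos hτ _).le]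

lemma lconvolution_lconvolution_gaussianKernel_le {τ D : ℝ} (hτ : 0 < τ) {h g : ℝ^d → ℝ}
    (hh : Integrable h) (hh₀ : ∀ x, 0 ≤ h x) (hh₁ : ∫ x, h x = 1) (hg : Integrable g)
    (hg₀ : ∀ x, 0 ≤ g x) (hD : ∀ x, gaussianAverage τ g x ≤ D) (x : ℝ^d) :
    (((fun y => ENNReal.ofReal (h y)) ⋆ₗ fun y => ENNReal.ofReal (g y)) ⋆ₗ
      fun z => ENNReal.ofReal (gaussianKernel τ z)) x ≤ ENNReal.ofReal D := by
  rw [← lconvolution_assoc₀ hh.aestronglyMeasurable.aemeasurable.ennreal_ofReal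
    hg.aestronglyMeasurable.aemeasurable.ennreal_ofReal
    (continuous_gaussianKernel τ).measurable.ennreal_ofReal.aemeasurable]
  refine (lconvolution_le_lintegral_mul (D := ENNReal.ofReal D) ENNReal.ofReal_ne_top
    (fun z => ?_) x).trans_eq ?_
  · rw [lconvolution_gaussianKernel hτ hg hg₀]
    exact ENNReal.ofReal_le_ofReal (hD z)
  · rw [← ofReal_integral_eq_lintegral_ofReal hh (Eventually.of_forall hh₀), hh₁,
      ENNReal.ofReal_one, one_mul]

lemma lintegral_Ioi_rpow {r c : ℝ} (hr : r < -1) (hc : 0 < c) :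
    ∫⁻ u in Ioi c, ENNReal.ofReal (u ^ r) = ENNReal.ofReal (-c ^ (r + 1) / (r + 1)) := by
  rw [← integral_Ioi_rpow_of_lt hr hc,
    ofReal_integral_eq_lintegral_ofReal (integrableOn_Ioi_rpow_of_lt hr hc)]
  filter_upwards [ae_restrict_mem measurableSet_Ioi] with u hu
  exact Real.rpow_nonneg (hc.trans hu).le _

lemma lintegral_Ioc_rpow {r c : ℝ} (hr : -1 < r) (hc : 0 < c) :
    ∫⁻ u in Ioc 0 c, ENNReal.ofReal (u ^ r) = ENNReal.ofReal (c ^ (r + 1) / (r + 1)) := by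
  have hvalue := integral_rpow (a := 0) (b := c) (r := r) (Or.inl hr)
  rw [Real.zero_rpow (by linarith), sub_zero, intervalIntegral.integral_of_le hc.le] at hvalue
  rw [← hvalue,
    ofReal_integral_eq_lintegral_ofReal (intervalIntegral.intervalIntegrable_rpow' hr).1]
  filter_upwards [ae_restrict_mem measurableSet_Ioc] with u hu
  exact Real.rpow_nonneg hu.1.le _

lemma lintegral_Ioi_inv_rpow_neg {a c : ℝ} (ha : 1 / 2 < a) (hc : 0 < c) :
    ∫⁻ u in Ioi c⁻¹, ENNReal.ofReal (u ^ (-(a + 1 / 2))) =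
      ENNReal.ofReal (c ^ (a - 1 / 2) / (a - 1 / 2)) := by
  rw [lintegral_Ioi_rpow (by linarith) (inv_pos.2 hc), Real.inv_rpow hc.le, ← Real.rpow_neg hc.le,
    ← neg_div_neg_eq, neg_neg]
  ring_nf

lemma lintegral_Ioi_rpow_neg_mul_rpow_add_inv_le {a S : ℝ} (ha : 1 / 2 < a) (hS : 0 < S) :
    ∫⁻ u in Ioi (0 : ℝ), ENNReal.ofReal (u ^ (-(a + 1 / 2)) * (S + u⁻¹) ^ (-a)) ≤
      ENNReal.ofReal ((2 + (a - 1 / 2)⁻¹) / √S) := by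
  have hS' : 0 < S⁻¹ := inv_pos.2 hS
  have ha' : 0 < a - 1 / 2 := by linarith
  have hnear : ∫⁻ u in Ioc 0 S⁻¹, ENNReal.ofReal (u ^ (-(a + 1 / 2)) * (S + u⁻¹) ^ (-a)) ≤
      ENNReal.ofReal (2 / √S) := by
    calc _ ≤ ∫⁻ u in Ioc 0 S⁻¹, ENNReal.ofReal (u ^ (-(1 / 2) : ℝ)) := by
          refine setLIntegral_mono' measurableSet_Ioc fun u hu => ENNReal.ofReal_le_ofReal ?_
          have hu₀ : 0 < u := hu.1
          calc u ^ (-(a + 1 / 2)) * (S + u⁻¹) ^ (-a) ≤ u ^ (-(a + 1 / 2)) * u⁻¹ ^ (-a) := by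
                gcongr ?_ * ?_
                exact Real.rpow_le_rpow_of_nonpos (by positivity) (by linarith) (by linarith)
            _ = u ^ (-(1 / 2) : ℝ) := by
                rw [Real.inv_rpow hu₀.le, ← Real.rpow_neg hu₀.le, ← Real.rpow_add hu₀]
                ring_nf
      _ = _ := by
          rw [lintegral_Ioc_rpow (by norm_num) hS', Real.inv_rpow hS.le, Real.sqrt_eq_rpow]
          ring_nf
  have hfar : ∫⁻ u in Ioi S⁻¹, ENNReal.ofReal (u ^ (-(a + 1 / 2)) * (S + u⁻¹) ^ (-a)) ≤
      ENNReal.ofReal ((a - 1 / 2)⁻¹ / √S) := by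
    calc _ ≤ ∫⁻ u in Ioi S⁻¹, ENNReal.ofReal (S ^ (-a)) * ENNReal.ofReal (u ^ (-(a + 1 / 2))) := by
          refine setLIntegral_mono' measurableSet_Ioi fun u hu => ?_
          have hu₀ : 0 < u := hS'.trans hu
          rw [← ENNReal.ofReal_mul (by positivity), mul_comm]
          refine ENNReal.ofReal_le_ofReal ?_
          gcongr ?_ * _
          exact Real.rpow_le_rpow_of_nonpos hS (le_add_of_nonneg_right (by positivity))
            (by linarith)
      _ = _ := by
          rw [lintegral_const_mul' _ _ ENNReal.ofReal_ne_top, lintegral_Ioi_inv_rpow_neg ha hS,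
            ← ENNReal.ofReal_mul (by positivity), ← mul_div_assoc, ← Real.rpow_add hS,
            show -a + (a - 1 / 2) = -(1 / 2) by ring, Real.rpow_neg hS.le, Real.sqrt_eq_rpow]
          ring_nf
  rw [← Ioc_union_Ioi_eq_Ioi hS'.le, add_div, ENNReal.ofReal_add (by positivity) (by positivity)]
  exact (lintegral_union_le _ _ _).trans (add_le_add hnear hfar)

section RieszDrift

variable {w f : ℝ^d → ℝ} {lam S Z δ B : ℝ}

lemma lintegral_Ioc_rpow_mul_lconvolution_gaussianKernel_le {a : ℝ} (ha : 1 / 2 < a) (hS : 0 < S)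
    (hZ : 0 ≤ Z) (hδ : 0 < δ) (hw : Integrable w) (hw₀ : ∀ x, 0 ≤ w x) (hf : Integrable f)
    (hf₀ : ∀ x, 0 ≤ f x) (hf₁ : ∫ x, f x = 1) (hmorrey : HasGaussianMorreyBound a S δ Z w)
    (x : ℝ^d) :
    ∫⁻ u in Ioc 0 δ⁻¹, ENNReal.ofReal (u ^ (-(a + 1 / 2))) *
      (((fun y => ENNReal.ofReal (w y)) ⋆ₗ fun y => ENNReal.ofReal (f y)) ⋆ₗ
        fun z => ENNReal.ofReal (gaussianKernel u⁻¹ z)) x ≤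
      ENNReal.ofReal (Z * ((2 + (a - 1 / 2)⁻¹) / √S)) := by
  have hpointwise : ∀ u ∈ Ioc 0 δ⁻¹, ENNReal.ofReal (u ^ (-(a + 1 / 2))) *
      (((fun y => ENNReal.ofReal (w y)) ⋆ₗ fun y => ENNReal.ofReal (f y)) ⋆ₗ
        fun z => ENNReal.ofReal (gaussianKernel u⁻¹ z)) x ≤
      ENNReal.ofReal Z * ENNReal.ofReal (u ^ (-(a + 1 / 2)) * (S + u⁻¹) ^ (-a)) := by
    rintro u ⟨hu, huδ⟩
    have hscale : 0 < S + u⁻¹ := by positivity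
    have haverage (z : ℝ^d) : gaussianAverage u⁻¹ w z ≤ Z * (S + u⁻¹) ^ (-a) := by
      rw [Real.rpow_neg hscale.le, ← div_eq_mul_inv, le_div_iff₀' (by positivity)]
      exact hmorrey u⁻¹ ((le_inv_comm₀ hδ hu).2 huδ) z
    rw [lconvolution_comm (f := fun y => ENNReal.ofReal (w y))]
    refine (mul_le_mul_right (lconvolution_lconvolution_gaussianKernel_le (inv_pos.2 hu) hf hf₀ hf₁
      hw hw₀ haverage x) _).trans_eq ?_
    rw [ENNReal.ofReal_mul hZ, ENNReal.ofReal_mul (by positivity), mul_left_comm]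
  refine (setLIntegral_mono' measurableSet_Ioc hpointwise).trans ?_
  rw [lintegral_const_mul' _ _ ENNReal.ofReal_ne_top, ENNReal.ofReal_mul hZ]
  gcongr
  exact (lintegral_mono_set Ioc_subset_Ioi_self).trans
    (lintegral_Ioi_rpow_neg_mul_rpow_add_inv_le ha hS)

lemma lintegral_Ioi_rpow_mul_lconvolution_gaussianKernel_le {a : ℝ} (ha : 1 / 2 < a) (hδ : 0 < δ)
    (hw : Integrable w) (hw₀ : ∀ x, 0 ≤ w x) (hw₁ : ∫ x, w x = 1) (hf : Integrable f)
    (hf₀ : ∀ x, 0 ≤ f x) (hB : ∀ x, f x ≤ B) (x : ℝ^d) :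
    ∫⁻ u in Ioi δ⁻¹, ENNReal.ofReal (u ^ (-(a + 1 / 2))) *
      (((fun y => ENNReal.ofReal (w y)) ⋆ₗ fun y => ENNReal.ofReal (f y)) ⋆ₗ
        fun z => ENNReal.ofReal (gaussianKernel u⁻¹ z)) x ≤
      ENNReal.ofReal (B * (δ ^ (a - 1 / 2) / (a - 1 / 2))) := by
  have hB₀ : 0 ≤ B := (hf₀ 0).trans (hB 0)
  rw [ENNReal.ofReal_mul hB₀, ← lintegral_Ioi_inv_rpow_neg ha hδ,
    ← lintegral_const_mul' _ _ ENNReal.ofReal_ne_top]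
  refine setLIntegral_mono' measurableSet_Ioi fun u hu => ?_
  have hu₀ : 0 < u⁻¹ := inv_pos.2 ((inv_pos.2 hδ).trans hu)
  rw [mul_comm]
  gcongr
  exact lconvolution_lconvolution_gaussianKernel_le hu₀ hw hw₀ hw₁ hf hf₀
    (gaussianAverage_le_of_le hu₀ hf hB) x

-- Averaging at scales above `δ` is controlled by the Morrey bound on `w`, below `δ` by `f ≤ B`.
lemma lconvolution_lconvolution_norm_rpow_neg_le (hlam : 0 < lam) (hlamd : lam < (d : ℝ) - 1)
    (hS : 0 < S) (hZ : 0 ≤ Z) (hδ : 0 < δ) (hw : Integrable w) (hw₀ : ∀ x, 0 ≤ w x)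
    (hw₁ : ∫ x, w x = 1) (hf : Integrable f) (hf₀ : ∀ x, 0 ≤ f x) (hf₁ : ∫ x, f x = 1)
    (hB : ∀ x, f x ≤ B) (hmorrey : HasGaussianMorreyBound (((d : ℝ) - lam) / 2) S δ Z w)
    (x : ℝ^d) :
    (((fun y => ENNReal.ofReal (w y)) ⋆ₗ fun y => ENNReal.ofReal (f y)) ⋆ₗ
      fun z => ENNReal.ofReal (‖z‖ ^ (-(lam + 1)))) x ≤
      ENNReal.ofReal (Real.pi ^ ((d : ℝ) / 2) / Real.Gamma ((lam + 1) / 2) *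
        (Z * ((2 + (((d : ℝ) - lam) / 2 - 1 / 2)⁻¹) / √S) +
          B * (δ ^ (((d : ℝ) - lam) / 2 - 1 / 2) / (((d : ℝ) - lam) / 2 - 1 / 2)))) := by
  have ha : 1 / 2 < ((d : ℝ) - lam) / 2 := by linarith
  have ha' : 0 < ((d : ℝ) - lam) / 2 - 1 / 2 := by linarith
  have hB₀ : 0 ≤ B := (hf₀ 0).trans (hB 0)
  have hGamma : 0 < Real.Gamma ((lam + 1) / 2) := Real.Gamma_pos_of_pos (by linarith)
  have hexponent : (lam + 1 - (d : ℝ)) / 2 - 1 = -(((d : ℝ) - lam) / 2 + 1 / 2) := by ring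
  refine (lconvolution_norm_rpow_neg_le (by linarith) (aemeasurable_lconvolution
    hw.aestronglyMeasurable.aemeasurable.ennreal_ofReal
    hf.aestronglyMeasurable.aemeasurable.ennreal_ofReal) x).trans ?_
  rw [hexponent, ENNReal.ofReal_mul (by have := Real.pi_pos; positivity)]
  gcongr
  rw [← Ioc_union_Ioi_eq_Ioi (inv_pos.2 hδ).le,
    ENNReal.ofReal_add (by positivity) (by positivity)]
  exact (lintegral_union_le _ _ _).trans (add_le_add
    (lintegral_Ioc_rpow_mul_lconvolution_gaussianKernel_le ha hS hZ hδ hw hw₀ hf hf₀ hf₁ hmorrey x)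
    (lintegral_Ioi_rpow_mul_lconvolution_gaussianKernel_le ha hδ hw hw₀ hw₁ hf hf₀ hB x))

lemma lconvolution_norm_rpow_neg_eq_ofReal_rieszConvolution {μ : ℝ} (hμ₀ : 0 ≤ μ) (hμ : μ < d)
    (hf : Continuous f) (hf' : HasCompactSupport f) (hf₀ : ∀ x, 0 ≤ f x) (z : ℝ^d) :
    ((fun y => ENNReal.ofReal (f y)) ⋆ₗ fun z => ENNReal.ofReal (‖z‖ ^ (-μ))) z =
      ENNReal.ofReal (rieszConvolution μ f z) := by
  rw [rieszConvolution_eq_integral_norm_sub, ofReal_integral_eq_lintegral_ofReal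
    (integrable_norm_sub_rpow_smul hμ₀ hμ hf hf' z)
    (Eventually.of_forall fun y => smul_nonneg (by positivity) (hf₀ y)), lconvolution_def]
  refine lintegral_congr fun y => ?_
  rw [neg_add_eq_sub, smul_eq_mul, ENNReal.ofReal_mul (by positivity), mul_comm]

lemma norm_integral_smul_gradient_rieszConvolution_le {R : ℝ} (hlam : 0 ≤ lam)
    (hlamd : lam < (d : ℝ) - 1) (hw : Integrable w) (hw₀ : ∀ x, 0 ≤ w x)
    (hf : Continuous f) (hf' : HasCompactSupport f) (hf₀ : ∀ x, 0 ≤ f x) (hR : 0 ≤ R) {x : ℝ^d}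
    (hconv : (((fun y => ENNReal.ofReal (w y)) ⋆ₗ fun y => ENNReal.ofReal (f y)) ⋆ₗ
      fun z => ENNReal.ofReal (‖z‖ ^ (-(lam + 1)))) x ≤ ENNReal.ofReal R) :
    ‖∫ y, w y • ∇ (rieszConvolution lam f) (x - y)‖ ≤ 2 * lam * R := by
  have hlam₁ : lam + 1 < d := by linarith
  rw [← ENNReal.ofReal_le_ofReal_iff (by positivity), ofReal_norm]
  refine (enorm_integral_le_lintegral_enorm _).trans ?_
  rw [ENNReal.ofReal_mul (by positivity)]
  refine le_trans ?_ (mul_le_mul_right hconv _)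
  rw [← lconvolution_assoc₀ hw.aestronglyMeasurable.aemeasurable.ennreal_ofReal
    hf.measurable.ennreal_ofReal.aemeasurable (Measurable.aemeasurable (by fun_prop)),
    lconvolution_def, ← lintegral_const_mul' _ _ ENNReal.ofReal_ne_top]
  refine lintegral_mono fun y => ?_
  rw [lconvolution_norm_rpow_neg_eq_ofReal_rieszConvolution (by linarith) hlam₁ hf hf' hf₀,
    neg_add_eq_sub, enorm_smul, Real.enorm_of_nonneg (hw₀ y), mul_left_comm, ← ofReal_norm,
    ← ENNReal.ofReal_mul (p := 2 * lam) (by positivity)]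
  gcongr
  exact norm_gradient_rieszConvolution_le hlam hlam₁ hf hf' hf₀ _

/-- The constant relating the size of the drift `∫ w(y) ∇(|·|^{-λ} * f)(x - y) dy`, for probability
densities `w` and `f`, to the scale-critical Gaussian Morrey bound of `w`. -/
def rieszDriftConst (d : ℕ) (lam : ℝ) : ℝ :=
  2 * lam * (Real.pi ^ ((d : ℝ) / 2) / Real.Gamma ((lam + 1) / 2) *
    (2 + (((d : ℝ) - lam) / 2 - 1 / 2)⁻¹))

lemma rieszDriftConst_pos (hlam : 0 < lam) (hlamd : lam < (d : ℝ) - 1) :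
    0 < rieszDriftConst d lam := by
  have ha : 0 < ((d : ℝ) - lam) / 2 - 1 / 2 := by linarith
  have hGamma : 0 < Real.Gamma ((lam + 1) / 2) := Real.Gamma_pos_of_pos (by linarith)
  have := Real.pi_pos
  unfold rieszDriftConst
  positivity

lemma isControlledDrift_rieszConvolution {σ κ T : ℝ} {w : ℝ → ℝ^d → ℝ} (hlam : 0 < lam)
    (hlamd : lam < (d : ℝ) - 1) (hσ : 0 < σ) (hκ : |κ| ≤ 1)
    (hw : ∀ t ∈ Icc 0 T, Integrable (w t)) (hw₀ : ∀ t ∈ Icc 0 T, ∀ x, 0 ≤ w t x)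
    (hw₁ : ∀ t ∈ Icc 0 T, ∫ x, w t x = 1) (hf : Continuous f) (hf' : HasCompactSupport f)
    (hf₀ : ∀ x, 0 ≤ f x) (hf₁ : ∫ x, f x = 1) :
    IsControlledDrift σ T (((d : ℝ) - lam) / 2) (rieszDriftConst d lam)
      (fun t z => κ • ∫ y, w t y • ∇ (rieszConvolution lam f) (z - y)) w := by
  obtain ⟨B, hB⟩ := hf'.exists_bound_of_continuous hf
  have hB' (x : ℝ^d) : f x ≤ B := (le_abs_self _).trans (hB x)
  have hB₀ : 0 ≤ B := (norm_nonneg _).trans (hB 0)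
  set q := ((d : ℝ) - lam) / 2 - 1 / 2 with hq
  have hq₀ : 0 < q := by linarith
  set c := Real.pi ^ ((d : ℝ) / 2) / Real.Gamma ((lam + 1) / 2)
  have hc₀ : 0 < c := div_pos (Real.rpow_pos_of_pos Real.pi_pos _)
    (Real.Gamma_pos_of_pos (by linarith))
  intro e he
  have herror : Tendsto (fun δ : ℝ => 2 * lam * (c * (B * (δ ^ q / q)))) (𝓝[>] 0) (𝓝 0) := by
    have hcont : Continuous fun δ : ℝ => 2 * lam * (c * (B * (δ ^ q / q))) := by
      have := Real.continuous_rpow_const hq₀.le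
      fun_prop
    simpa [Real.zero_rpow hq₀.ne'] using (hcont.tendsto 0).mono_left nhdsWithin_le_nhds
  obtain ⟨δ, hδe, hδ⟩ := ((herror.eventually (gt_mem_nhds he)).and self_mem_nhdsWithin).exists
  refine ⟨δ, hδ, fun s hs Z hZ hmorrey x => ?_⟩
  have hs' : s ∈ Icc 0 T := Ioc_subset_Icc_self hs
  have hS : 0 < 4 * σ * s := by have := hs.1; positivity
  have hdrift := norm_integral_smul_gradient_rieszConvolution_le hlam.le hlamd (hw s hs')
    (hw₀ s hs') hf hf' hf₀ (by positivity)
    (lconvolution_lconvolution_norm_rpow_neg_le hlam hlamd hS hZ hδ (hw s hs') (hw₀ s hs')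
      (hw₁ s hs') (hf.integrable_of_hasCompactSupport hf') hf₀ hf₁ hB' hmorrey x)
  calc ‖κ • ∫ y, w s y • ∇ (rieszConvolution lam f) (x - y)‖
      ≤ ‖∫ y, w s y • ∇ (rieszConvolution lam f) (x - y)‖ := by
        rw [norm_smul]
        exact mul_le_of_le_one_left (norm_nonneg _) hκ
    _ ≤ 2 * lam * (c * (Z * ((2 + q⁻¹) / √(4 * σ * s)) + B * (δ ^ q / q))) := hdrift
    _ = rieszDriftConst d lam * Z / √(4 * σ * s) + 2 * lam * (c * (B * (δ ^ q / q))) := by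
        rw [rieszDriftConst]
        ring
    _ ≤ rieszDriftConst d lam * Z / √(4 * σ * s) + e := by gcongr

end RieszDrift

section InitialBound

variable {f : ℝ^d → ℝ} {p q τ : ℝ}

lemma gaussianKernel_rpow_le (hτ : 0 < τ) (hq : 1 ≤ q) (x : ℝ^d) :
    gaussianKernel τ x ^ q ≤ (τ ^ (-(d : ℝ) / 2)) ^ (q - 1) * gaussianKernel τ x := by
  have hG := gaussianKernel_pos hτ x
  calc gaussianKernel τ x ^ q = gaussianKernel τ x ^ (q - 1) * gaussianKernel τ x := by
        rw [← Real.rpow_add_one hG.ne', sub_add_cancel]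
    _ ≤ (τ ^ (-(d : ℝ) / 2)) ^ (q - 1) * gaussianKernel τ x :=
        mul_le_mul_of_nonneg_right
          (Real.rpow_le_rpow hG.le (gaussianKernel_le hτ x) (by linarith)) hG.le

lemma integrable_gaussianKernel_rpow (hτ : 0 < τ) (hq : 1 ≤ q) :
    Integrable fun y : ℝ^d => gaussianKernel τ y ^ q :=
  ((integrable_gaussianKernel hτ).const_mul _).mono'
    ((continuous_gaussianKernel τ).rpow_const fun _ =>
      Or.inr (by linarith)).aestronglyMeasurable
    (Eventually.of_forall fun y => by
      rw [Real.norm_of_nonneg (Real.rpow_nonneg (gaussianKernel_pos hτ y).le q)]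
      exact gaussianKernel_rpow_le hτ hq y)

lemma memLp_gaussianKernel (hτ : 0 < τ) (hq : 1 ≤ q) :
    MemLp (gaussianKernel τ : ℝ^d → ℝ) (ENNReal.ofReal q) := by
  have hq₀ : 0 < q := by linarith
  rw [← integrable_norm_rpow_iff (continuous_gaussianKernel τ).aestronglyMeasurable
    (by simpa using hq₀) ENNReal.ofReal_ne_top, ENNReal.toReal_ofReal hq₀.le]
  simp only [Real.norm_of_nonneg (gaussianKernel_pos hτ _).le]
  exact integrable_gaussianKernel_rpow hτ hq

lemma integral_gaussianKernel_rpow_le (hτ : 0 < τ) (hq : 1 ≤ q) :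
    ∫ y : ℝ^d, gaussianKernel τ y ^ q ≤ (τ ^ (-(d : ℝ) / 2)) ^ (q - 1) := by
  calc ∫ y : ℝ^d, gaussianKernel τ y ^ q
      ≤ ∫ y : ℝ^d, (τ ^ (-(d : ℝ) / 2)) ^ (q - 1) * gaussianKernel τ y :=
        integral_mono (integrable_gaussianKernel_rpow hτ hq)
          ((integrable_gaussianKernel hτ).const_mul _) fun y => gaussianKernel_rpow_le hτ hq y
    _ = (τ ^ (-(d : ℝ) / 2)) ^ (q - 1) := by
        rw [integral_const_mul, integral_gaussianKernel hτ, mul_one]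

lemma toReal_eLpNorm_of_nonneg {α : Type*} [MeasurableSpace α] {μ : Measure α} {g : α → ℝ}
    (hp : 0 < p) (hg : MemLp g (ENNReal.ofReal p) μ) (hg₀ : ∀ x, 0 ≤ g x) :
    (eLpNorm g (ENNReal.ofReal p) μ).toReal = (∫ x, g x ^ p ∂μ) ^ (1 / p) := by
  have hint : 0 ≤ ∫ x, g x ^ p ∂μ := integral_nonneg fun x => Real.rpow_nonneg (hg₀ x) p
  rw [hg.eLpNorm_eq_integral_rpow_norm (by simpa using hp) ENNReal.ofReal_ne_top,
    ENNReal.toReal_ofReal hp.le]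
  simp only [Real.norm_of_nonneg (hg₀ _)]
  rw [ENNReal.toReal_ofReal (Real.rpow_nonneg hint _), one_div]

lemma gaussianAverage_le_rpow_mul_eLpNorm (hp : 1 < p) (hτ : 0 < τ) (hf₀ : ∀ x, 0 ≤ f x)
    (hf : MemLp f (ENNReal.ofReal p)) (x : ℝ^d) :
    gaussianAverage τ f x ≤
      τ ^ (-((d : ℝ) / (2 * p))) * (eLpNorm f (ENNReal.ofReal p)).toReal := by
  obtain ⟨q, hpq⟩ : ∃ q, p.HolderConjugate q := ⟨_, Real.HolderConjugate.conjExponent hp⟩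
  have hq : 1 < q := hpq.symm.lt
  have hq₀ : 0 < q := hpq.symm.pos
  have hkernel : MemLp (fun y => gaussianKernel τ (x - y)) (ENNReal.ofReal q) :=
    (memLp_gaussianKernel hτ hq.le).comp_measurePreserving
      (Measure.measurePreserving_sub_left volume x)
  have hexponent : -(d : ℝ) / 2 * (q - 1) * (1 / q) = -((d : ℝ) / (2 * p)) := by
    rw [mul_assoc, mul_one_div, sub_div, div_self hq₀.ne', one_div, hpq.symm.one_sub_inv]
    ring
  have hholder := integral_mul_le_Lp_mul_Lq_of_nonneg hpq.symm
    (Eventually.of_forall fun y => (gaussianKernel_pos hτ (x - y)).le)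
    (Eventually.of_forall hf₀) hkernel hf
  rw [integral_sub_left_eq_self (fun y => gaussianKernel τ y ^ q) volume x,
    ← toReal_eLpNorm_of_nonneg hpq.pos hf hf₀] at hholder
  refine hholder.trans (mul_le_mul_of_nonneg_right ?_ ENNReal.toReal_nonneg)
  calc (∫ y : ℝ^d, gaussianKernel τ y ^ q) ^ (1 / q)
      ≤ ((τ ^ (-(d : ℝ) / 2)) ^ (q - 1)) ^ (1 / q) :=
        Real.rpow_le_rpow
          (integral_nonneg fun y => Real.rpow_nonneg (gaussianKernel_pos hτ y).le q)
          (integral_gaussianKernel_rpow_le hτ hq.le) (one_div_nonneg.2 hq₀.le)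
    _ = τ ^ (-((d : ℝ) / (2 * p))) := by
        rw [← Real.rpow_mul hτ.le, ← Real.rpow_mul hτ.le, hexponent]

lemma hasGaussianMorreyBound_of_eLpNorm_le {δ M : ℝ} (hp : 1 < p) (hδ : 0 < δ) (hM : 0 ≤ M)
    (hf : AEStronglyMeasurable f) (hf₀ : ∀ x, 0 ≤ f x)
    (hnorm : eLpNorm f (ENNReal.ofReal p) ≤ ENNReal.ofReal M) :
    HasGaussianMorreyBound ((d : ℝ) / (2 * p)) 0 δ M f := by
  intro τ hδτ x
  have hτ : 0 < τ := hδ.trans_le hδτ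
  rw [zero_add]
  calc τ ^ ((d : ℝ) / (2 * p)) * gaussianAverage τ f x
      ≤ τ ^ ((d : ℝ) / (2 * p)) * (τ ^ (-((d : ℝ) / (2 * p))) * M) := by
        gcongr
        refine (gaussianAverage_le_rpow_mul_eLpNorm hp hτ hf₀
          ⟨hf, hnorm.trans_lt ENNReal.ofReal_lt_top⟩ x).trans ?_
        gcongr
        exact ENNReal.toReal_le_of_le_ofReal hM hnorm
    _ = M := by
        rw [← mul_assoc, ← Real.rpow_add hτ, add_neg_cancel, Real.rpow_zero, one_mul]

lemma hasGaussianMorreyBound_of_eLpNorm_critical_le {δ lam M : ℝ} (hlam : 0 < lam) (hlamd : lam < d)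
    (hδ : 0 < δ) (hM : 0 ≤ M) (hf : AEStronglyMeasurable f) (hf₀ : ∀ x, 0 ≤ f x)
    (hnorm : eLpNorm f (ENNReal.ofReal ((d : ℝ) / ((d : ℝ) - lam))) ≤ ENNReal.ofReal M) :
    HasGaussianMorreyBound (((d : ℝ) - lam) / 2) 0 δ M f := by
  have hd₀ : (0 : ℝ) < d := hlam.trans hlamd
  have hdlam : 0 < (d : ℝ) - lam := sub_pos.2 hlamd
  have hp : 1 < (d : ℝ) / ((d : ℝ) - lam) := (one_lt_div hdlam).2 (by linarith)
  have hexponent : (d : ℝ) / (2 * ((d : ℝ) / ((d : ℝ) - lam))) = ((d : ℝ) - lam) / 2 := by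
    field_simp
  exact hexponent ▸ hasGaussianMorreyBound_of_eLpNorm_le hp hδ hM hf hf₀ hnorm

end InitialBound

section Mollifier

/-- The rescaling `χ^η(z) = η^{-d} χ(z/η)` of a density `χ`. -/
def rescaledDensity (η : ℝ) (χ : ℝ^d → ℝ) (z : ℝ^d) : ℝ :=
  η ^ (-(d : ℝ)) * χ (η⁻¹ • z)

variable {χ : ℝ^d → ℝ} {η lam : ℝ}

lemma contDiff_rescaledDensity {n : WithTop ℕ∞} (hχ : ContDiff ℝ n χ) :
    ContDiff ℝ n (rescaledDensity η χ) :=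
  contDiff_const.mul (hχ.comp (contDiff_const_smul _))

lemma hasCompactSupport_rescaledDensity (hη : η ≠ 0) (hχ : HasCompactSupport χ) :
    HasCompactSupport (rescaledDensity η χ) :=
  (hχ.comp_smul (inv_ne_zero hη)).mul_left

lemma rescaledDensity_nonneg (hη : 0 ≤ η) (hχ : ∀ x, 0 ≤ χ x) (z : ℝ^d) :
    0 ≤ rescaledDensity η χ z :=
  mul_nonneg (Real.rpow_nonneg hη _) (hχ _)

lemma integral_rescaledDensity (hη : 0 < η) : ∫ z, rescaledDensity η χ z = ∫ z, χ z := by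
  unfold rescaledDensity
  rw [integral_const_mul, Measure.integral_comp_inv_smul_of_nonneg volume χ hη.le, smul_eq_mul,
    finrank_euclideanSpace_fin, ← mul_assoc, ← Real.rpow_natCast, ← Real.rpow_add hη,
    neg_add_cancel, Real.rpow_zero, one_mul]

lemma Veta_eq_rieszConvolution :
    Veta lam χ η = rieszConvolution lam (rescaledDensity η χ) := by
  ext z
  simp only [Veta, rieszConvolution, rescaledDensity, smul_eq_mul, mul_comm]

end Mollifier

section Aggregation

variable {σ κ T lam : ℝ} {w : ℝ → ℝ^d → ℝ} {K : ℝ^d → ℝ^d}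

-- The solution is regarded as solving a linear equation, with `K * w` as a given drift.
lemma IsAggregationSolution.isDriftDiffusionSolution {A B : ℝ}
    (H : IsAggregationSolution σ κ T K w) (hK : ContDiff ℝ 1 K) (hA : ∀ z, ‖K z‖ ≤ A)
    (hB : ∀ z, ‖fderiv ℝ K z‖ ≤ B) :
    IsDriftDiffusionSolution σ T (fun t z => κ • ∫ y, w t y • K (z - y)) w := by
  obtain ⟨hsmooth, hschwartz, hnonneg, hmass, hderiv⟩ := H
  have hint (t : ℝ) (ht : t ∈ Icc 0 T) : Integrable (w t) := by
    obtain ⟨S, hS⟩ := hschwartz t ht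
    rw [funext hS]
    exact S.integrable
  refine ⟨hsmooth.of_le (WithTop.coe_le_coe.2 le_top), hint, hnonneg, hmass,
    fun t ht => (contDiff_one_integral_smul_comp_sub (hint t ht) hK hA hB).const_smul κ,
    ⟨|κ| * A, fun t ht x => ?_⟩, fun t ht x => ?_⟩
  · rw [norm_smul, Real.norm_eq_abs]
    gcongr
    calc ‖∫ y, w t y • K (x - y)‖ ≤ ∫ y, w t y * A :=
          norm_integral_le_of_norm_le ((hint t ht).mul_const A) (Eventually.of_forall fun y => by
            rw [norm_smul, Real.norm_of_nonneg (hnonneg t ht y)]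
            exact mul_le_mul_of_nonneg_left (hA _) (hnonneg t ht y))
      _ = A := by rw [integral_mul_const, hmass t ht, one_mul]
  · simpa only [smul_comm (w t _) κ, diverg_const_smul] using hderiv t ht x

lemma norm_le_toReal_eLpNorm_top {X E : Type*} [TopologicalSpace X] [MeasurableSpace X]
    {μ : Measure X} [μ.IsOpenPosMeasure] [NormedAddCommGroup E] {g : X → E} (hg : Continuous g)
    (hg' : MemLp g ⊤ μ) (x : X) : ‖g x‖ ≤ (eLpNorm g ⊤ μ).toReal := by
  have hae : ∀ᵐ y ∂μ, ‖g y‖ ≤ (eLpNorm g ⊤ μ).toReal := by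
    filter_upwards [ae_le_eLpNormEssSup (f := g) (μ := μ)] with y hy
    rw [← toReal_enorm, eLpNorm_exponent_top]
    exact ENNReal.toReal_mono (by simpa using hg'.2.ne) hy
  have hclosed : IsClosed {y | ‖g y‖ ≤ (eLpNorm g ⊤ μ).toReal} :=
    isClosed_le hg.norm continuous_const
  exact hclosed.closure_subset (Measure.dense_of_ae hae x)

lemma eLpNorm_top_le_two_mul_of_forall_le {X : Type*} [TopologicalSpace X] [MeasurableSpace X]
    {μ : Measure X} [μ.IsOpenPosMeasure] {u v : X → ℝ} (hv : Continuous v) (hv' : MemLp v ⊤ μ)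
    (huv : ∀ M, (∀ x, v x ≤ M) → ∀ x, |u x| ≤ 2 * M) :
    eLpNorm u ⊤ μ ≤ 2 * eLpNorm v ⊤ μ := by
  have hu := huv (eLpNorm v ⊤ μ).toReal fun x =>
    (le_abs_self _).trans (norm_le_toReal_eLpNorm_top hv hv' x)
  calc eLpNorm u ⊤ μ ≤ ENNReal.ofReal (2 * (eLpNorm v ⊤ μ).toReal) := by
        rw [eLpNorm_exponent_top]
        exact eLpNormEssSup_le_of_ae_bound (Eventually.of_forall hu)
    _ = 2 * eLpNorm v ⊤ μ := by
        rw [ENNReal.ofReal_mul zero_le_two, ENNReal.ofReal_toReal hv'.2.ne, ENNReal.ofReal_ofNat]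

lemma IsAggregationSolution.eLpNorm_top_le_two_mul {f : ℝ^d → ℝ} {M : ℝ} (hlam : 0 < lam)
    (hlamd : lam < (d : ℝ) - 1) (hσ : 0 < σ) (hκ : |κ| ≤ 1) (hT : 0 < T) (hf : ContDiff ℝ 2 f)
    (hf' : HasCompactSupport f) (hf₀ : ∀ x, 0 ≤ f x) (hf₁ : ∫ x, f x = 1) (hM : 0 < M)
    (hsmall : duhamelConst d σ * (2 * rieszDriftConst d lam * M / √σ) ≤ 1 / 3)
    (H : IsAggregationSolution σ κ T (∇ (rieszConvolution lam f)) w)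
    (hinit : eLpNorm (w 0) (ENNReal.ofReal ((d : ℝ) / ((d : ℝ) - lam))) ≤ ENNReal.ofReal M) :
    ∀ t ∈ Icc 0 T, eLpNorm (w t) ⊤ ≤ 2 * eLpNorm (w 0) ⊤ := by
  have hlamd' : lam < d := by linarith
  have hc := rieszDriftConst_pos hlam hlamd
  have h0T : (0 : ℝ) ∈ Icc 0 T := left_mem_Icc.2 hT.le
  obtain ⟨A, hA⟩ := exists_norm_gradient_rieszConvolution_le hlam.le hlamd'
    (hf.of_le one_le_two) hf'
  obtain ⟨B, hB⟩ := exists_norm_fderiv_gradient_rieszConvolution_le hlam.le hlamd' hf hf'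
  have Hlin := H.isDriftDiffusionSolution
    (contDiff_gradient_rieszConvolution hlam.le hlamd' hf hf') hA hB
  obtain ⟨S, hS⟩ := H.2.1 0 h0T
  have hwS : w 0 = S := funext hS
  have hcont : Continuous (w 0) := hwS ▸ S.continuous
  have hbdd : MemLp (w 0) ⊤ := hwS ▸ S.memLp ⊤
  have hdrift := Hlin.norm_drift_le_div_sqrt hσ hT (by linarith) (by linarith) hc hM hsmall
    (isControlledDrift_rieszConvolution hlam hlamd hσ hκ Hlin.integrable Hlin.nonneg
      Hlin.integral_eq_one hf.continuous hf' hf₀ hf₁) fun δ hδ =>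
      hasGaussianMorreyBound_of_eLpNorm_critical_le hlam hlamd' hδ hM.le
        hcont.aestronglyMeasurable (Hlin.nonneg 0 h0T) hinit
  intro t ht
  refine eLpNorm_top_le_two_mul_of_forall_le hcont hbdd fun N hN x => ?_
  rw [abs_of_nonneg (Hlin.nonneg t ht x)]
  exact Hlin.le_two_mul_of_norm_drift_le_div_sqrt hσ (by positivity) (by linarith) hdrift hN t ht x

end Aggregation

theorem intermediate_equation_Linfty_bound_general
    (d : ℕ) (lam : ℝ) (hlam : 0 < lam) (hlamd : lam < (d : ℝ) - 1) (σ : ℝ) (hσ : 0 < σ) :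
    ∃ Cstar : ℝ, 0 < Cstar ∧
      ∀ (χ : ℝ^d → ℝ), ContDiff ℝ 2 χ → HasCompactSupport χ → (∀ x, 0 ≤ χ x) → (∫ x, χ x) = 1 →
      ∀ (T : ℝ), 0 < T → ∀ (κ : ℝ), |κ| ≤ 1 → ∀ (η : ℝ), 0 < η →
      ∀ (w : ℝ → ℝ^d → ℝ), IsAggregationSolution σ κ T (∇ (Veta lam χ η)) w →
        eLpNorm (w 0) (ENNReal.ofReal ((d : ℝ) / ((d : ℝ) - lam))) < ENNReal.ofReal Cstar →
        ∀ t ∈ Icc 0 T, eLpNorm (w t) ⊤ ≤ 2 * eLpNorm (w 0) ⊤ := by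
  have hc := rieszDriftConst_pos hlam hlamd
  have hD := duhamelConst_pos d hσ
  have hsqrt := Real.sqrt_pos.2 hσ
  refine ⟨√σ / (6 * rieszDriftConst d lam * duhamelConst d σ), by positivity,
    fun χ hχ hχ' hχ₀ hχ₁ T hT κ hκ η hη w H hinit => ?_⟩
  rw [Veta_eq_rieszConvolution] at H
  refine H.eLpNorm_top_le_two_mul hlam hlamd hσ hκ hT (contDiff_rescaledDensity hχ)
    (hasCompactSupport_rescaledDensity hη.ne' hχ') (rescaledDensity_nonneg hη.le hχ₀)
    ((integral_rescaledDensity hη).trans hχ₁) (by positivity) (le_of_eq ?_) hinit.le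
  field_simp
  norm_num

end

/-- Uniform-in-`η` `L^∞` bound for the intermediate equation: for `d ≥ 3`,
`0 < λ < d-2`, `σ > 0` there is `C* > 0` depending only on `d`, `λ`, `σ`, and for every
`T > 0`, `M > 0` and mollifier `χ` a constant `C > 0` depending only on
`d`, `λ`, `σ`, `T`, `M`, `χ`, such that every classical Schwartz-class solution `w` of
`∂_t w = σΔw − κ div(w ∇V^η * w)` on `[0,T]` with `‖w(0)‖_{L^{p*}} < C*` and
`‖w(0)‖_{L¹} + ‖w(0)‖_{L^∞} ≤ M` satisfies `sup_{0≤t≤T} ‖w(t)‖_{L^∞} ≤ C`. -/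
theorem intermediate_equation_Linfty_bound
    (d : ℕ) (hd : 3 ≤ d) (lam : ℝ) (hlam0 : 0 < lam) (hlamd : lam < (d : ℝ) - 2)
    (σ : ℝ) (hσ : 0 < σ) :
    ∃ Cstar : ℝ, 0 < Cstar ∧
      ∀ (T : ℝ), 0 < T →
      ∀ (M : ℝ), 0 < M →
      ∀ (χ : EuclideanSpace ℝ (Fin d) → ℝ),
        ContDiff ℝ (⊤ : ℕ∞) χ → HasCompactSupport χ → (∀ x, 0 ≤ χ x) → (∫ x, χ x) = 1 →
      ∃ C : ℝ, 0 < C ∧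
        ∀ (κ : ℝ), (κ = 1 ∨ κ = -1) →
        ∀ (η : ℝ), 0 < η →
        ∀ (w : ℝ → EuclideanSpace ℝ (Fin d) → ℝ),
          IsAggregationSolution σ κ T (gradient (Veta lam χ η)) w →
          eLpNorm (w 0) (ENNReal.ofReal ((d : ℝ) / ((d : ℝ) - lam))) volume
            < ENNReal.ofReal Cstar →
          (eLpNorm (w 0) 1 volume).toReal + (eLpNorm (w 0) ⊤ volume).toReal ≤ M →
        ∀ t ∈ Icc (0:ℝ) T,
          eLpNorm (w t) ⊤ volume ≤ ENNReal.ofReal C := by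
  obtain ⟨Cstar, hCstar, hbound⟩ :=
    intermediate_equation_Linfty_bound_general d lam hlam0 (by linarith) σ hσ
  refine ⟨Cstar, hCstar, fun T hT M hM χ hχ hχ' hχ₀ hχ₁ => ⟨2 * M, by positivity,
    fun κ hκ η hη w H hinit hnorm t ht => ?_⟩⟩
  have hκ' : |κ| ≤ 1 := by rcases hκ with rfl | rfl <;> simp
  obtain ⟨S, hS⟩ := H.2.1 0 (left_mem_Icc.2 hT.le)
  have hfinite : eLpNorm (w 0) ⊤ volume ≠ ⊤ := by
    rw [funext hS]
    exact (S.memLp ⊤ volume).eLpNorm_ne_top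
  have hw₀ : eLpNorm (w 0) ⊤ volume ≤ ENNReal.ofReal M :=
    (ENNReal.le_ofReal_iff_toReal_le hfinite hM.le).2
      ((le_add_of_nonneg_left ENNReal.toReal_nonneg).trans hnorm)
  calc eLpNorm (w t) ⊤ volume ≤ 2 * eLpNorm (w 0) ⊤ volume :=
        hbound χ (hχ.of_le (WithTop.coe_le_coe.2 le_top)) hχ' hχ₀ hχ₁ T hT κ hκ' η hη w H hinit t ht
    _ ≤ 2 * ENNReal.ofReal M := by gcongr
    _ = ENNReal.ofReal (2 * M) := by rw [ENNReal.ofReal_mul zero_le_two, ENNReal.ofReal_ofNat]
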